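/- Let L be an odd unimodular lattice in dimension 44 having minimum norm 4. Then L has kissing number 6600 if and only if σ(L) = 20. -/

import Mathlib

open scoped RealInnerProductSpace

noncomputable section

/-- The norm `(x, x)` of a vector `x ∈ ℝⁿ` (squared Euclidean length). -/
def normOf {n : ℕ} (x : EuclideanSpace ℝ (Fin n)) : ℝ := ⟪x, x⟫

/-- The dual `L* = {x ∈ ℝⁿ : (x,y) ∈ ℤ for all y ∈ L}` of a set of vectors. -/
def dualSet {n : ℕ} (L : Set (EuclideanSpace ℝ (Fin n))) : Set (EuclideanSpace ℝ (Fin n)) :=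
  {x | ∀ y ∈ L, ∃ m : ℤ, ⟪x, y⟫ = (m : ℝ)}

/-- `L` is a unimodular lattice: `L = L*`. -/
def IsUnimodularLattice {n : ℕ} (L : Set (EuclideanSpace ℝ (Fin n))) : Prop :=
  L = dualSet L

/-- `L` is odd: some vector of `L` has odd (integral) norm. -/
def IsOddLattice {n : ℕ} (L : Set (EuclideanSpace ℝ (Fin n))) : Prop :=
  ∃ x ∈ L, ∃ m : ℤ, Odd m ∧ normOf x = (m : ℝ)

/-- The even sublattice `L₀ = {x ∈ L : (x,x) even}`. -/
def evenSublattice {n : ℕ} (L : Set (EuclideanSpace ℝ (Fin n))) :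
    Set (EuclideanSpace ℝ (Fin n)) :=
  {x | x ∈ L ∧ ∃ m : ℤ, normOf x = 2 * (m : ℝ)}

/-- The shadow `S(L) = L₀* \ L`. -/
def shadow {n : ℕ} (L : Set (EuclideanSpace ℝ (Fin n))) : Set (EuclideanSpace ℝ (Fin n)) :=
  dualSet (evenSublattice L) \ L

/-- `L` has minimum norm `r`: `r` is the least norm among nonzero vectors of `L`. -/
def HasMinNorm {n : ℕ} (L : Set (EuclideanSpace ℝ (Fin n))) (r : ℝ) : Prop :=
  IsLeast {s : ℝ | ∃ x ∈ L, x ≠ 0 ∧ normOf x = s} r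

/-- The shadow `S(L)` has minimum norm `r`. -/
def HasShadowMinNorm {n : ℕ} (L : Set (EuclideanSpace ℝ (Fin n))) (r : ℝ) : Prop :=
  IsLeast {s : ℝ | ∃ x ∈ shadow L, normOf x = s} r

/-- `σ(L) = r`, i.e. `4 · min(S(L)) = r`. -/
def HasSigma {n : ℕ} (L : Set (EuclideanSpace ℝ (Fin n))) (r : ℝ) : Prop :=
  ∃ s : ℝ, HasShadowMinNorm L s ∧ r = 4 * s

/-- The number of vectors of norm `r` in `L`; when `L` has minimum norm `r`,
this is the kissing number of `L`. -/
def numVecsOfNorm {n : ℕ} (L : Set (EuclideanSpace ℝ (Fin n))) (r : ℝ) : ℕ :=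
  Set.ncard {x ∈ L | normOf x = r}

/-! Write `q = exp (πiτ)`. By Poisson summation, the theta series of the shadow of `L`, of `L`
itself, and of `L` translated by one transform under `SL(2, ℤ)` like the powers `θ₂⁴⁴, θ₃⁴⁴, θ₄⁴⁴`
of the Jacobi theta constants. The shadow consists of the halves of characteristic vectors of `L`,
and van der Blij's lemma shows that their norms are odd integers. Multiplying the three series by
suitable polynomials of weight 4 or 16 in `θ₂⁴, θ₃⁴, θ₄⁴` and adding the products gives level-one
modular forms of weight 26 and 38. As there is no nonzero form of weight 2, subtracting multiples of
`E₄`-`E₆` monomials and dividing by `Δ` leaves a linear relation between the first coefficients of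
such a form. Writing `Nₘ` for numbers of vectors of norm `m`, these relations read
`N₄(L) = 6600 + 1216 N₁(S) + 16 N₃(S)`, and `N₅(S) = 1622016` if `N₁(S) = N₃(S) = 0`. Hence the
kissing number is 6600 exactly when the shadow has no vectors of norm 1 or 3, and its minimum norm
is then 5. -/

open ModularForm MatrixGroups EisensteinSeries
open UpperHalfPlane hiding I
open scoped Manifold Real Topology Pointwise

local notation "𝕢" => Function.Periodic.qParam

theorem qParam_two_one_vadd (τ : ℍ) : 𝕢 2 ((1 : ℝ) +ᵥ τ : ℍ) = -𝕢 2 τ := by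
  have h : 2 * π * Complex.I * ((1 : ℝ) + τ) / (2 : ℝ) =
      2 * π * Complex.I * τ / (2 : ℝ) + π * Complex.I := by
    push_cast
    ring
  rw [coe_vadd, Function.Periodic.qParam, h, Complex.exp_add, Complex.exp_pi_mul_I, mul_neg_one,
    Function.Periodic.qParam]

theorem qParam_two_sq (τ : ℂ) : 𝕢 2 τ ^ 2 = 𝕢 1 τ := by
  rw [Function.Periodic.qParam, Function.Periodic.qParam, ← Complex.exp_nat_mul]
  push_cast
  ring_nf

/-- `f` is the sum on the upper half-plane of the power series `p` in the local parameter
`exp (2πiτ/h)` at the cusp `i∞`. -/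
def HasCuspExpansion (h : ℝ) (f : ℍ → ℂ) (p : PowerSeries ℂ) : Prop :=
  ∀ τ : ℍ, HasSum (fun n ↦ p.coeff n * 𝕢 h τ ^ n) (f τ)

namespace HasCuspExpansion

variable {h : ℝ} {f g : ℍ → ℂ} {p q : PowerSeries ℂ}

theorem mul (hf : HasCuspExpansion h f p) (hg : HasCuspExpansion h g q) :
    HasCuspExpansion h (f * g) (p * q) := fun τ ↦ by
  have hfτ := (hf τ).summable.norm
  have hgτ := (hg τ).summable.norm
  have hcauchy := (summable_norm_sum_mul_antidiagonal_of_summable_norm hfτ hgτ).of_norm.hasSum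
  rw [← tsum_mul_tsum_eq_tsum_sum_antidiagonal_of_summable_norm hfτ hgτ, (hf τ).tsum_eq,
    (hg τ).tsum_eq] at hcauchy
  refine hcauchy.congr_fun fun n ↦ ?_
  rw [PowerSeries.coeff_mul, Finset.sum_mul]
  refine Finset.sum_congr rfl fun ij hij ↦ ?_
  rw [← Finset.HasAntidiagonal.mem_antidiagonal.mp hij, pow_add]
  ring

theorem add (hf : HasCuspExpansion h f p) (hg : HasCuspExpansion h g q) :
    HasCuspExpansion h (f + g) (p + q) := fun τ ↦ by
  simpa only [map_add, add_mul, Pi.add_apply] using (hf τ).add (hg τ)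

theorem neg (hf : HasCuspExpansion h f p) : HasCuspExpansion h (-f) (-p) := fun τ ↦ by
  simpa only [map_neg, neg_mul, Pi.neg_apply] using (hf τ).neg

theorem sub (hf : HasCuspExpansion h f p) (hg : HasCuspExpansion h g q) :
    HasCuspExpansion h (f - g) (p - q) := by
  simpa only [sub_eq_add_neg] using hf.add hg.neg

theorem mdifferentiable (hh : 0 < h) (hf : HasCuspExpansion h f p) : MDiff f := by
  set s := FormalMultilinearSeries.ofScalars ℂ (fun n ↦ p.coeff n)
  have hsum (τ : ℍ) : s.sum (𝕢 h τ) = f τ := by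
    simpa [s, FormalMultilinearSeries.sum, mul_comm] using (hf τ).tsum_eq
  have hrad : 1 ≤ s.radius := by
    refine le_of_forall_lt_imp_le_of_dense fun r hr ↦ ?_
    lift r to NNReal using hr.ne_top
    rcases eq_or_ne r 0 with rfl | hr0
    · simp
    have hr1 : ‖(r : ℂ)‖ < 1 := by simpa using hr
    have hr0' : (r : ℂ) ≠ 0 := by simpa using hr0
    let τ : ℍ := ⟨_, Function.Periodic.im_invQParam_pos_of_norm_lt_one hh hr1 hr0'⟩
    have hτ : 𝕢 h τ = r := Function.Periodic.qParam_right_inv hh.ne' hr0'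
    apply FormalMultilinearSeries.le_radius_of_summable
    simpa [s, hτ] using (hf τ).summable.norm
  have hdiff := (s.hasFPowerSeriesOnBall (one_pos.trans_le hrad)).differentiableOn
  rw [UpperHalfPlane.mdifferentiable_iff]
  refine DifferentiableOn.congr (hdiff.comp
    (Function.Periodic.differentiable_qParam (h := h)).differentiableOn fun z hz ↦ ?_)
    fun z hz ↦ ?_
  · refine Metric.eball_subset_eball hrad ?_
    rw [← ENNReal.coe_one, Metric.eball_coe, NNReal.coe_one, mem_ball_zero_iff]
    exact Function.Periodic.norm_qParam_lt_one hh hz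
  · simpa [ofComplex_apply_of_im_pos hz] using (hsum ⟨z, hz⟩).symm

/-- Averaging over `τ` and `τ + 1` discards the odd powers of `exp (πiτ)`. -/
theorem of_periodic_one (hf : HasCuspExpansion 2 f p) (hT : ∀ τ : ℍ, f ((1 : ℝ) +ᵥ τ) = f τ) :
    HasCuspExpansion 1 f (.mk fun n ↦ p.coeff (2 * n)) := fun τ ↦ by
  have havg := ((hf τ).add (hT τ ▸ hf ((1 : ℝ) +ᵥ τ))).div_const 2
  rw [add_self_div_two] at havg
  have hinj : Function.Injective fun n : ℕ ↦ 2 * n := fun _ _ h ↦ by simpa using h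
  refine ((hinj.hasSum_iff fun n hn ↦ ?_).mpr havg).congr_fun fun n ↦ ?_
  · have hodd : Odd n := by
      rw [← Nat.not_even_iff_odd, even_iff_exists_two_mul]
      rintro ⟨k, rfl⟩
      exact hn ⟨k, rfl⟩
    rw [qParam_two_one_vadd, hodd.neg_pow, mul_neg, add_neg_cancel, zero_div]
  · rw [Function.comp_apply, PowerSeries.coeff_mk, qParam_two_one_vadd,
      (even_two_mul n).neg_pow, add_self_div_two, pow_mul, qParam_two_sq]

theorem exists_modularForm {k : ℤ} (hf : HasCuspExpansion 1 f p)
    (hS : ∀ τ : ℍ, f (ModularGroup.S • τ) = τ ^ k * f τ) :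
    ∃ F : ModularForm 𝒮ℒ k, qExpansion 1 F = p := by
  have hslash : ∀ γ : SL(2, ℤ), f ∣[k] γ = f := by
    refine SlashInvariantForm.slash_action_generators_SL2Z ?_ ?_ <;> ext τ
    · rw [SL_slash_apply, hS, ModularGroup.denom_S, mul_right_comm, ← zpow_add₀ (ne_zero τ),
        add_neg_cancel, zpow_zero, one_mul]
    · have hT : f ((1 : ℝ) +ᵥ τ) = f τ := (hf _).unique <| by
        simpa [Function.Periodic.qParam, mul_add, Complex.exp_add] using hf τ
      have hdenom : denom ModularGroup.T τ = 1 := by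
        rw [ModularGroup.denom_apply]
        simp [ModularGroup.coe_T]
      rw [SL_slash_apply, modular_T_smul, hT, hdenom, one_zpow, mul_one]
  let F : ModularForm 𝒮ℒ k :=
    { toFun := f
      slash_action_eq' := by rintro _ ⟨γ, rfl⟩; exact hslash γ
      holo' := hf.mdifferentiable one_pos
      bdd_at_cusps' := fun {c} hc ↦ by
        rw [OnePoint.isBoundedAt_iff_forall_SL2Z hc]
        intro γ _
        rw [hslash γ]
        exact isBoundedAtImInfty_of_hasSum_qExpansion one_pos hf }
  exact ⟨F, PowerSeries.ext fun n ↦ (ModularFormClass.qExpansion_coeff_unique (f := F) one_pos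
    one_mem_strictPeriods_SL hf n).symm⟩

end HasCuspExpansion

/-- The power series `p` has integral initial coefficients `a 0, …, a (n - 1)`. -/
def HasInitialCoeffs {n : ℕ} (p : PowerSeries ℂ) (a : Fin n → ℤ) : Prop :=
  ∀ i : Fin n, p.coeff i = a i

namespace HasInitialCoeffs

variable {n : ℕ} {p q : PowerSeries ℂ} {a b c : Fin n → ℤ}

theorem add (hp : HasInitialCoeffs p a) (hq : HasInitialCoeffs q b) :
    HasInitialCoeffs (p + q) (a + b) := fun i ↦ by
  rw [map_add, hp, hq, Pi.add_apply, Int.cast_add]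

theorem neg (hp : HasInitialCoeffs p a) : HasInitialCoeffs (-p) (-a) := fun i ↦ by
  rw [map_neg, hp, Pi.neg_apply, Int.cast_neg]

theorem sub (hp : HasInitialCoeffs p a) (hq : HasInitialCoeffs q b) :
    HasInitialCoeffs (p - q) (a - b) := by
  simpa only [sub_eq_add_neg] using hp.add hq.neg

theorem mul (hp : HasInitialCoeffs p a) (hq : HasInitialCoeffs q b)
    (hc : ∀ i, ∑ j ∈ Finset.Iic i, a j * b (i - j) = c i) : HasInitialCoeffs (p * q) c := fun i ↦ by
  rw [← hc, PowerSeries.coeff_mul, Finset.Nat.sum_antidiagonal_eq_sum_range_succ_mk,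
    Nat.range_succ_eq_Iic, ← Fin.map_valEmbedding_Iic, Finset.sum_map, Int.cast_sum]
  refine Finset.sum_congr rfl fun j hj ↦ ?_
  rw [Int.cast_mul, ← hp, ← hq, Fin.sub_val_of_le (Finset.mem_Iic.mp hj), Fin.valEmbedding_apply]

end HasInitialCoeffs

theorem hasCuspExpansion_qExpansion {k : ℤ} (F : ModularForm 𝒮ℒ k) :
    HasCuspExpansion 1 F (qExpansion 1 F) :=
  ModularForm.hasSum_qExpansion _ one_pos one_mem_strictPeriods_SL

theorem hasInitialCoeffs_E₄ : HasInitialCoeffs (qExpansion 1 E₄) ![1, 240, 2160, 6720] := by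
  have hb : bernoulli 4 = -1 / 30 := by decide +kernel
  intro i
  fin_cases i <;> norm_num [E_qExpansion_coeff _ ⟨2, rfl⟩, hb, ArithmeticFunction.sigma_apply]

theorem hasInitialCoeffs_E₆ :
    HasInitialCoeffs (qExpansion 1 E₆) ![1, -504, -16632, -122976] := by
  have hb : bernoulli 6 = 1 / 42 := by decide +kernel
  intro i
  fin_cases i <;> norm_num [E_qExpansion_coeff _ ⟨3, rfl⟩, hb, ArithmeticFunction.sigma_apply]

theorem hasInitialCoeffs_E₄_sq :
    HasInitialCoeffs (qExpansion 1 E₄ ^ 2) ![1, 480, 61920, 1050240] := by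
  rw [pow_two]
  exact hasInitialCoeffs_E₄.mul hasInitialCoeffs_E₄ (by decide)

theorem hasInitialCoeffs_E₄_cube :
    HasInitialCoeffs (qExpansion 1 E₄ ^ 3) ![1, 720, 179280, 16954560] := by
  rw [pow_succ]
  exact hasInitialCoeffs_E₄_sq.mul hasInitialCoeffs_E₄ (by decide)

theorem hasInitialCoeffs_E₄_sq_mul_E₆ :
    HasInitialCoeffs (qExpansion 1 E₄ ^ 2 * qExpansion 1 E₆) ![1, -24, -196632, -38263776] :=
  hasInitialCoeffs_E₄_sq.mul hasInitialCoeffs_E₆ (by decide)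

theorem qExpansion_discriminant :
    qExpansion 1 discriminant =
      PowerSeries.C (1 / 1728 : ℂ) * (qExpansion 1 E₄ ^ 3 - qExpansion 1 E₆ ^ 2) := by
  have h4 := hasCuspExpansion_qExpansion E₄
  have h6 := hasCuspExpansion_qExpansion E₆
  have hval (τ : ℍ) :
      CuspForm.discriminant τ = 1 / 1728 * (E₄ τ * (E₄ τ * E₄ τ) - E₆ τ * E₆ τ) := by
    rw [CuspForm.coe_discriminant, discriminant_eq_E₄_cube_sub_E₆_sq]
    ring
  refine PowerSeries.ext fun n ↦ (ModularFormClass.qExpansion_coeff_unique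
    (c := fun n ↦
      (PowerSeries.C (1 / 1728 : ℂ) * (qExpansion 1 E₄ ^ 3 - qExpansion 1 E₆ ^ 2)).coeff n)
    (f := CuspForm.discriminant) one_pos one_mem_strictPeriods_SL (fun τ ↦ ?_) n).symm
  rw [hval]
  refine ((((h4.mul (h4.mul h4)).sub (h6.mul h6)) τ).mul_left (1 / 1728)).congr_fun fun n ↦ ?_
  rw [PowerSeries.coeff_C_mul, smul_eq_mul, mul_assoc, pow_succ', pow_two, pow_two]

theorem hasInitialCoeffs_discriminant :
    HasInitialCoeffs (qExpansion 1 discriminant) ![0, 1, -24, 252] := by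
  have hE₆_sq : HasInitialCoeffs (qExpansion 1 E₆ ^ 2) ![1, -1008, 220752, 16519104] := by
    rw [pow_two]
    exact hasInitialCoeffs_E₆.mul hasInitialCoeffs_E₆ (by decide)
  intro i
  rw [qExpansion_discriminant, PowerSeries.coeff_C_mul, hasInitialCoeffs_E₄_cube.sub hE₆_sq i]
  fin_cases i <;> norm_num

/-- Subtracting a multiple of `E₄² E₆ (E₄³)ᵐ` makes `F` cuspidal, hence divisible by `Δ`. -/
theorem exists_qExpansion_eq_smul_add_discriminant_mul {k : ℤ} (m : ℕ) (hk : k = 14 + 12 * m)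
    (F : ModularForm 𝒮ℒ k) :
    ∃ G : ModularForm 𝒮ℒ (k - 12), qExpansion 1 F =
      (qExpansion 1 F).coeff 0 •
          (qExpansion 1 E₄ ^ 2 * qExpansion 1 E₆ * (qExpansion 1 E₄ ^ 3) ^ m) +
        qExpansion 1 discriminant * qExpansion 1 G := by
  set a := (qExpansion 1 F).coeff 0
  let B : ModularForm 𝒮ℒ k :=
    ModularForm.mcast (by rw [hk]; ring) (((E₄.pow 2).mul E₆).mul ((E₄.pow 3).pow m))
  have hB : qExpansion 1 B =
      qExpansion 1 E₄ ^ 2 * qExpansion 1 E₆ * (qExpansion 1 E₄ ^ 3) ^ m := by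
    simp only [B, ModularForm.qExpansion_mcast,
      ModularForm.qExpansion_mul one_pos one_mem_strictPeriods_SL,
      ModularForm.qExpansion_pow one_pos one_mem_strictPeriods_SL]
  have hB0 : (qExpansion 1 B).coeff 0 = 1 := by
    simpa [hB] using
      congrArg₂ (· * · ^ m) (hasInitialCoeffs_E₄_sq_mul_E₆ 0) (hasInitialCoeffs_E₄_cube 0)
  have hsub : qExpansion 1 (F - a • B : ModularForm 𝒮ℒ k) =
      qExpansion 1 F - a • qExpansion 1 B := by
    rw [FunLike.coe_sub, ModularForm.qExpansion_sub one_pos one_mem_strictPeriods_SL,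
      FunLike.coe_smul, ModularForm.qExpansion_smul one_pos one_mem_strictPeriods_SL]
  have hcusp : (qExpansion 1 (F - a • B : ModularForm 𝒮ℒ k)).coeff 0 = 0 := by
    rw [hsub, map_sub, PowerSeries.coeff_smul, hB0, smul_eq_mul, mul_one, sub_self]
  have hfactor := qExpansion_eq_qExpansion_discriminant_mul _ hcusp
  exact ⟨_, by rw [← hfactor, hsub, hB, add_sub_cancel]⟩

theorem coeff_discriminant_mul (p : PowerSeries ℂ) :
    (qExpansion 1 discriminant * p).coeff 1 = p.coeff 0 ∧
    (qExpansion 1 discriminant * p).coeff 2 = p.coeff 1 - 24 * p.coeff 0 ∧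
    (qExpansion 1 discriminant * p).coeff 3 = p.coeff 2 - 24 * p.coeff 1 + 252 * p.coeff 0 := by
  have h0 : (qExpansion 1 discriminant).coeff 0 = 0 := by
    simpa using hasInitialCoeffs_discriminant 0
  have h1 : (qExpansion 1 discriminant).coeff 1 = 1 := by
    simpa using hasInitialCoeffs_discriminant 1
  have h2 : (qExpansion 1 discriminant).coeff 2 = -24 := by
    simpa using hasInitialCoeffs_discriminant 2
  have h3 : (qExpansion 1 discriminant).coeff 3 = 252 := by
    simpa using hasInitialCoeffs_discriminant 3
  simp only [PowerSeries.coeff_mul, Finset.Nat.sum_antidiagonal_eq_sum_range_succ_mk,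
    Finset.sum_range_succ, Finset.sum_range_zero, h0, h1, h2, h3]
  refine ⟨?_, ?_, ?_⟩ <;> ring_nf

theorem exists_coeff_eq_of_hasInitialCoeffs {k : ℤ} (m : ℕ) (hk : k = 14 + 12 * m)
    (F : ModularForm 𝒮ℒ k) {b₀ b₁ b₂ b₃ : ℤ}
    (hb : HasInitialCoeffs (qExpansion 1 E₄ ^ 2 * qExpansion 1 E₆ * (qExpansion 1 E₄ ^ 3) ^ m)
      ![b₀, b₁, b₂, b₃]) :
    ∃ G : ModularForm 𝒮ℒ (k - 12),
      (qExpansion 1 F).coeff 1 = b₁ * (qExpansion 1 F).coeff 0 + (qExpansion 1 G).coeff 0 ∧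
      (qExpansion 1 F).coeff 2 = b₂ * (qExpansion 1 F).coeff 0 +
        ((qExpansion 1 G).coeff 1 - 24 * (qExpansion 1 G).coeff 0) ∧
      (qExpansion 1 F).coeff 3 = b₃ * (qExpansion 1 F).coeff 0 +
        ((qExpansion 1 G).coeff 2 - 24 * (qExpansion 1 G).coeff 1 +
          252 * (qExpansion 1 G).coeff 0) := by
  obtain ⟨G, hG⟩ := exists_qExpansion_eq_smul_add_discriminant_mul m hk F
  have hcoeff (i : Fin 4) : (qExpansion 1 F).coeff i = (![b₀, b₁, b₂, b₃] i : ℤ) *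
      (qExpansion 1 F).coeff 0 + (qExpansion 1 discriminant * qExpansion 1 G).coeff i :=
    calc (qExpansion 1 F).coeff i = _ := congrArg (PowerSeries.coeff i) hG
      _ = _ := by rw [map_add, PowerSeries.coeff_smul, hb i, smul_eq_mul, mul_comm]
  obtain ⟨hΔ₁, hΔ₂, hΔ₃⟩ := coeff_discriminant_mul (qExpansion 1 G)
  exact ⟨G, hΔ₁ ▸ hcoeff 1, hΔ₂ ▸ hcoeff 2, hΔ₃ ▸ hcoeff 3⟩

theorem qExpansion_eq_zero_of_weight_two {k : ℤ} (hk : k = 2) (F : ModularForm 𝒮ℒ k) :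
    qExpansion 1 F = 0 := by
  subst hk
  rw [rank_zero_iff_forall_zero.mp levelOne_weight_two_rank_zero F, FunLike.coe_zero,
    qExpansion_zero]

theorem coeff_one_of_weight_fourteen {k : ℤ} (hk : k = 14) (F : ModularForm 𝒮ℒ k) :
    (qExpansion 1 F).coeff 1 = -24 * (qExpansion 1 F).coeff 0 := by
  obtain ⟨G, h₁, -⟩ := exists_coeff_eq_of_hasInitialCoeffs 0 hk F
    (by simpa using hasInitialCoeffs_E₄_sq_mul_E₆)
  rw [h₁, qExpansion_eq_zero_of_weight_two (by omega) G, map_zero, add_zero]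
  norm_cast

theorem coeff_two_of_weight_twenty_six {k : ℤ} (hk : k = 26) (F : ModularForm 𝒮ℒ k) :
    (qExpansion 1 F).coeff 2 =
      -48 * (qExpansion 1 F).coeff 1 - 1224 * (qExpansion 1 F).coeff 0 := by
  have hb : HasInitialCoeffs (qExpansion 1 E₄ ^ 2 * qExpansion 1 E₆ * (qExpansion 1 E₄ ^ 3) ^ 1)
      ![1, 696, -34632, -167186976] := by
    rw [pow_one]
    exact hasInitialCoeffs_E₄_sq_mul_E₆.mul hasInitialCoeffs_E₄_cube (by decide)
  obtain ⟨G, h₁, h₂, -⟩ := exists_coeff_eq_of_hasInitialCoeffs 1 hk F hb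
  have hG := coeff_one_of_weight_fourteen (by omega) G
  push_cast at h₁ h₂
  linear_combination h₂ + hG + 48 * h₁

theorem coeff_three_of_weight_thirty_eight {k : ℤ} (hk : k = 38) (F : ModularForm 𝒮ℒ k) :
    (qExpansion 1 F).coeff 3 = -72 * (qExpansion 1 F).coeff 2 -
      2700 * (qExpansion 1 F).coeff 1 - 70080 * (qExpansion 1 F).coeff 0 := by
  have hE₄_six : HasInitialCoeffs ((qExpansion 1 E₄ ^ 3) ^ 2) ![1, 1440, 876960, 292072320] := by
    rw [pow_two]
    exact hasInitialCoeffs_E₄_cube.mul hasInitialCoeffs_E₄_cube (by decide)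
  have hb : HasInitialCoeffs (qExpansion 1 E₄ ^ 2 * qExpansion 1 E₆ * (qExpansion 1 E₄ ^ 3) ^ 2)
      ![1, 1416, 645768, -50388576] :=
    hasInitialCoeffs_E₄_sq_mul_E₆.mul hE₄_six (by decide)
  obtain ⟨G, h₁, h₂, h₃⟩ := exists_coeff_eq_of_hasInitialCoeffs 2 hk F hb
  have hG := coeff_two_of_weight_twenty_six (by omega) G
  push_cast at h₁ h₂ h₃
  linear_combination h₃ + hG + 72 * h₂ + 2700 * h₁

/-- `f` has a power series expansion at `i∞` in the parameter `exp (2πiτ/h)`, with integral initial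
coefficients `a 0, …, a (n - 1)`. -/
def HasCuspCoeffs {n : ℕ} (h : ℝ) (f : ℍ → ℂ) (a : Fin n → ℤ) : Prop :=
  ∃ p : PowerSeries ℂ, HasCuspExpansion h f p ∧ HasInitialCoeffs p a

namespace HasCuspCoeffs

variable {n : ℕ} {h : ℝ} {f g : ℍ → ℂ} {a b c : Fin n → ℤ}

theorem add (hf : HasCuspCoeffs h f a) (hg : HasCuspCoeffs h g b) :
    HasCuspCoeffs h (f + g) (a + b) :=
  let ⟨_, hf, ha⟩ := hf
  let ⟨_, hg, hb⟩ := hg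
  ⟨_, hf.add hg, ha.add hb⟩

theorem neg (hf : HasCuspCoeffs h f a) : HasCuspCoeffs h (-f) (-a) :=
  let ⟨_, hf, ha⟩ := hf
  ⟨_, hf.neg, ha.neg⟩

theorem sub (hf : HasCuspCoeffs h f a) (hg : HasCuspCoeffs h g b) :
    HasCuspCoeffs h (f - g) (a - b) :=
  let ⟨_, hf, ha⟩ := hf
  let ⟨_, hg, hb⟩ := hg
  ⟨_, hf.sub hg, ha.sub hb⟩

theorem mul (hf : HasCuspCoeffs h f a) (hg : HasCuspCoeffs h g b)
    (hc : ∀ i, ∑ j ∈ Finset.Iic i, a j * b (i - j) = c i) : HasCuspCoeffs h (f * g) c :=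
  let ⟨_, hf, ha⟩ := hf
  let ⟨_, hg, hb⟩ := hg
  ⟨_, hf.mul hg, ha.mul hb hc⟩

theorem of_hasSum_pow {ι : Type*} {ν : ι → ℕ}
    (hf : ∀ τ : ℍ, HasSum (fun x ↦ 𝕢 h τ ^ ν x) (f τ))
    (ha : ∀ i : Fin n, {x | ν x = i}.ncard = a i) : HasCuspCoeffs h f a := by
  refine ⟨.mk fun n ↦ ({x | ν x = n}.ncard : ℂ), fun τ ↦ ?_, fun i ↦ ?_⟩
  · refine ((hf τ).tsum_fiberwise ν).congr_fun fun n ↦ ?_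
    have hfiber (x : ν ⁻¹' {n}) : 𝕢 h τ ^ ν x = 𝕢 h τ ^ n := by rw [x.2]
    rw [tsum_congr hfiber, tsum_const, nsmul_eq_mul, PowerSeries.coeff_mk]
    rfl
  · rw [PowerSeries.coeff_mk, ← ha, Int.cast_natCast]

theorem one_vadd (hf : HasCuspCoeffs 2 f a) :
    HasCuspCoeffs 2 (fun τ ↦ f ((1 : ℝ) +ᵥ τ)) fun i ↦ (-1) ^ (i : ℕ) * a i := by
  obtain ⟨p, hf, ha⟩ := hf
  refine ⟨PowerSeries.rescale (-1) p, fun τ ↦ ?_, fun i ↦ ?_⟩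
  · refine (hf ((1 : ℝ) +ᵥ τ)).congr_fun fun n ↦ ?_
    rw [qParam_two_one_vadd, PowerSeries.coeff_rescale, neg_pow]
    ring
  · rw [PowerSeries.coeff_rescale, ha]
    push_cast
    rfl

end HasCuspCoeffs

/-- A triple `(F 0, F 1, F 2)` of functions on the upper half-plane that transforms, up to a
multiplier `ε`, like the triple `(θ₂, θ₃, θ₄)` of Jacobi theta functions, in weight `k`:
translation exchanges `F 1` and `F 2`, inversion exchanges `F 0` and `F 2`. -/
structure IsThetaTriple (k : ℕ) (ε : ℂ) (F : Fin 3 → ℍ → ℂ) : Prop where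
  vadd_zero (τ : ℍ) : F 0 ((1 : ℝ) +ᵥ τ) = ε * F 0 τ
  vadd_one (τ : ℍ) : F 1 ((1 : ℝ) +ᵥ τ) = F 2 τ
  vadd_two (τ : ℍ) : F 2 ((1 : ℝ) +ᵥ τ) = F 1 τ
  S_smul (i : Fin 3) (τ : ℍ) : F i (ModularGroup.S • τ) = ε * τ ^ k * F i.rev τ

namespace IsThetaTriple

variable {k l : ℕ} {ε δ : ℂ} {F G : Fin 3 → ℍ → ℂ}

theorem mul (hF : IsThetaTriple k ε F) (hG : IsThetaTriple l δ G) :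
    IsThetaTriple (k + l) (ε * δ) (F * G) where
  vadd_zero τ := by simp only [Pi.mul_apply, hF.vadd_zero, hG.vadd_zero]; ring
  vadd_one τ := by simp only [Pi.mul_apply, hF.vadd_one, hG.vadd_one]
  vadd_two τ := by simp only [Pi.mul_apply, hF.vadd_two, hG.vadd_two]
  S_smul i τ := by simp only [Pi.mul_apply, hF.S_smul, hG.S_smul]; ring

theorem linear_twist (hF : IsThetaTriple k (-1) F) :
    IsThetaTriple k 1 ![F 1 + F 2, F 0 - F 2, -F 0 - F 1] where
  vadd_zero τ := by simp [hF.vadd_one, hF.vadd_two, add_comm]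
  vadd_one τ := by simp [hF.vadd_zero, hF.vadd_two]
  vadd_two τ := by simp [hF.vadd_zero, hF.vadd_one]
  S_smul i τ := by
    have hS := fun j ↦ hF.S_smul j τ
    generalize ModularGroup.S • τ = σ at hS ⊢
    fin_cases i <;> simp [hS] <;> ring

theorem quadratic_twist (hF : IsThetaTriple k (-1) F) :
    IsThetaTriple (2 * k) 1 ![F 1 * F 2, -(F 0 * F 2), F 0 * F 1] where
  vadd_zero τ := by simp [hF.vadd_one, hF.vadd_two, mul_comm]
  vadd_one τ := by simp [hF.vadd_zero, hF.vadd_two]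
  vadd_two τ := by simp [hF.vadd_zero, hF.vadd_one]
  S_smul i τ := by
    have hS := fun j ↦ hF.S_smul j τ
    generalize ModularGroup.S • τ = σ at hS ⊢
    fin_cases i <;> simp [hS] <;> ring

/-- The modular form is the sum `F 0 + F 1 + F 2`. -/
theorem exists_modularForm {n : ℕ} {a b : Fin n → ℤ} (hF : IsThetaTriple k 1 F)
    (h₀ : HasCuspCoeffs 2 (F 0) a) (h₁ : HasCuspCoeffs 2 (F 1) b) :
    ∃ M : ModularForm 𝒮ℒ k, ∀ (m : ℕ) (i : Fin n), i = 2 * m →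
      (qExpansion 1 M).coeff m = a i + 2 * b i := by
  have h₂ : HasCuspCoeffs 2 (F 2) fun i ↦ (-1) ^ (i : ℕ) * b i := by
    simpa only [hF.vadd_one] using h₁.one_vadd
  obtain ⟨p, hp, hpc⟩ := (h₀.add h₁).add h₂
  have hT (τ : ℍ) : (F 0 + F 1 + F 2) ((1 : ℝ) +ᵥ τ) = (F 0 + F 1 + F 2) τ := by
    simp only [Pi.add_apply, hF.vadd_zero, hF.vadd_one, hF.vadd_two]
    ring
  have hS (τ : ℍ) : (F 0 + F 1 + F 2) (ModularGroup.S • τ) =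
      (τ : ℂ) ^ (k : ℤ) * (F 0 + F 1 + F 2) τ := by
    have hS' := fun j ↦ hF.S_smul j τ
    generalize ModularGroup.S • τ = σ at hS' ⊢
    simp only [Fin.isValue, Pi.add_apply, hS', one_mul, Fin.rev_zero, Fin.reduceLast, Fin.reduceRev,
      zpow_natCast]
    ring
  obtain ⟨M, hM⟩ := (hp.of_periodic_one hT).exists_modularForm hS
  refine ⟨M, fun m i hi ↦ ?_⟩
  rw [hM, PowerSeries.coeff_mk, ← hi, hpc]
  simp only [Pi.add_apply, hi, (even_two_mul m).neg_one_pow]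
  push_cast
  ring

end IsThetaTriple

theorem coe_S_smul (τ : ℍ) : ((ModularGroup.S • τ : ℍ) : ℂ) = (-τ : ℂ)⁻¹ := by
  rw [modular_S_smul, coe_mk]

theorem S_smul_S_smul (τ : ℍ) : ModularGroup.S • ModularGroup.S • τ = τ := by
  ext
  rw [coe_S_smul, coe_S_smul, ← inv_neg, neg_neg, inv_inv]

/-- Since `S² = -1`, the law of `F 0` under inversion forces that of `F 2`. -/
theorem IsThetaTriple.of_S_smul {k : ℕ} {ε : ℂ} {F : Fin 3 → ℍ → ℂ} (hk : Even k) (hε : ε * ε = 1)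
    (hT₀ : ∀ τ : ℍ, F 0 ((1 : ℝ) +ᵥ τ) = ε * F 0 τ) (hT₁ : ∀ τ : ℍ, F 1 ((1 : ℝ) +ᵥ τ) = F 2 τ)
    (hT₂ : ∀ τ : ℍ, F 2 ((1 : ℝ) +ᵥ τ) = F 1 τ)
    (hS₀ : ∀ τ : ℍ, F 0 (ModularGroup.S • τ) = ε * τ ^ k * F 2 τ)
    (hS₁ : ∀ τ : ℍ, F 1 (ModularGroup.S • τ) = ε * τ ^ k * F 1 τ) : IsThetaTriple k ε F where
  vadd_zero := hT₀
  vadd_one := hT₁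
  vadd_two := hT₂
  S_smul := by
    have hS₂ (τ : ℍ) : F 2 (ModularGroup.S • τ) = ε * τ ^ k * F 0 τ := by
      have h := hS₀ (ModularGroup.S • τ)
      have hcoe : ((ModularGroup.S • τ : ℍ) : ℂ) ^ k = ((τ : ℂ) ^ k)⁻¹ := by
        rw [coe_S_smul, inv_pow, hk.neg_pow]
      have hτ := pow_ne_zero k (ne_zero τ)
      rw [S_smul_S_smul, hcoe] at h
      rw [h]
      field_simp
      rw [sq, hε, mul_one]
    intro i
    fin_cases i
    exacts [hS₀, hS₁, hS₂]

/-- The fourth powers `(θ₂⁴, θ₃⁴, θ₄⁴)` of the Jacobi theta constants, with the fractional power in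
`θ₂(τ) = exp (πiτ/4) ∑ exp (πi(n² - n)τ)` cleared. -/
def jacobiThetaPowFour : Fin 3 → ℍ → ℂ :=
  ![fun τ ↦ 𝕢 2 τ * jacobiTheta₂ (-τ / 2) τ ^ 4, fun τ ↦ jacobiTheta τ ^ 4,
    fun τ ↦ jacobiTheta₂ (1 / 2) τ ^ 4]

theorem hasSum_jacobiTheta₂_neg_half (τ : ℍ) :
    HasSum (fun n : ℤ ↦ 𝕢 2 τ ^ (n ^ 2 - n).natAbs) (jacobiTheta₂ (-τ / 2) τ) := by
  refine (hasSum_jacobiTheta₂_term _ τ.im_pos).congr_fun fun n ↦ ?_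
  have hn : (((n ^ 2 - n).natAbs : ℤ) : ℂ) = n ^ 2 - n := by
    rw [Int.natAbs_of_nonneg (sub_nonneg.mpr (Int.le_self_sq n))]
    push_cast
    rfl
  rw [Int.cast_natCast] at hn
  rw [jacobiTheta₂_term, Function.Periodic.qParam, ← Complex.exp_nat_mul, hn]
  push_cast
  ring_nf

theorem hasSum_jacobiTheta (τ : ℍ) :
    HasSum (fun n : ℤ ↦ 𝕢 2 τ ^ n.natAbs ^ 2) (jacobiTheta τ) := by
  rw [jacobiTheta_eq_jacobiTheta₂]
  refine (hasSum_jacobiTheta₂_term _ τ.im_pos).congr_fun fun n ↦ ?_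
  have hn : ((n.natAbs : ℤ) : ℂ) ^ 2 = n ^ 2 := mod_cast Int.natAbs_sq n
  rw [Int.cast_natCast] at hn
  rw [jacobiTheta₂_term, Function.Periodic.qParam, ← Complex.exp_nat_mul, Nat.cast_pow, hn]
  push_cast
  ring_nf

theorem jacobiTheta_one_vadd (τ : ℍ) :
    jacobiTheta ((1 : ℝ) +ᵥ τ : ℍ) = jacobiTheta₂ (1 / 2) τ := by
  rw [jacobiTheta_eq_jacobiTheta₂]
  refine tsum_congr fun n ↦ ?_
  obtain ⟨m, hm⟩ := Int.even_mul_pred_self n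
  have hm' : (n : ℂ) * (n - 1) = m + m := mod_cast hm
  rw [jacobiTheta₂_term, jacobiTheta₂_term, Complex.exp_eq_exp_iff_exists_int]
  refine ⟨m, ?_⟩
  rw [coe_vadd]
  push_cast
  linear_combination π * Complex.I * hm'

theorem jacobiTheta₂_neg_half_one_vadd (τ : ℍ) :
    jacobiTheta₂ (-((1 : ℝ) +ᵥ τ : ℍ) / 2) ((1 : ℝ) +ᵥ τ : ℍ) = jacobiTheta₂ (-τ / 2) τ := by
  refine (hasSum_jacobiTheta₂_neg_half _).unique <|
    (hasSum_jacobiTheta₂_neg_half τ).congr_fun fun n ↦ ?_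
  have heven : Even (n ^ 2 - n).natAbs := by
    rw [Int.natAbs_even, pow_two, ← mul_sub_one]
    exact Int.even_mul_pred_self n
  rw [qParam_two_one_vadd, heven.neg_pow]

theorem neg_I_mul_cpow_half_pow_four (z : ℂ) : ((-Complex.I * z) ^ (1 / 2 : ℂ)) ^ 4 = -z ^ 2 := by
  rw [← Complex.cpow_mul_nat]
  norm_num [mul_pow]

theorem jacobiTheta₂_neg_half_S_smul (τ : ℍ) :
    𝕢 2 (ModularGroup.S • τ : ℍ) * jacobiTheta₂ (-(ModularGroup.S • τ : ℍ) / 2)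
      (ModularGroup.S • τ : ℍ) ^ 4 = -τ ^ 2 * jacobiTheta₂ (1 / 2) τ ^ 4 := by
  have hτ := ne_zero τ
  have hz : -((ModularGroup.S • τ : ℍ) : ℂ) / 2 = 1 / 2 / τ := by
    rw [coe_S_smul]
    field_simp
  have hS : ((ModularGroup.S • τ : ℍ) : ℂ) = -1 / τ := by
    rw [coe_S_smul, inv_neg, neg_div, one_div]
  have hexp : Complex.exp (-π * Complex.I * (1 / 2) ^ 2 / τ) ^ 4 = 𝕢 2 (-1 / τ) := by
    rw [← Complex.exp_nat_mul, Function.Periodic.qParam]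
    congr 1
    push_cast
    field_simp
    norm_num
  rw [hz, hS, jacobiTheta₂_functional_equation (1 / 2) τ, mul_pow, mul_pow, hexp, one_div_pow,
    neg_I_mul_cpow_half_pow_four]
  field_simp

theorem isThetaTriple_jacobiThetaPowFour : IsThetaTriple 2 (-1) jacobiThetaPowFour := by
  refine .of_S_smul even_two (by norm_num) (fun τ ↦ ?_) (fun τ ↦ ?_) (fun τ ↦ ?_) (fun τ ↦ ?_)
    fun τ ↦ ?_
  · change 𝕢 2 _ * jacobiTheta₂ _ _ ^ 4 = -1 * (𝕢 2 τ * _)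
    rw [qParam_two_one_vadd, jacobiTheta₂_neg_half_one_vadd]
    ring
  · exact congrArg (· ^ 4) (jacobiTheta_one_vadd τ)
  · change jacobiTheta₂ _ _ ^ 4 = jacobiTheta τ ^ 4
    rw [← jacobiTheta_one_vadd, vadd_vadd, coe_vadd]
    norm_num [jacobiTheta_two_add]
  · refine (jacobiTheta₂_neg_half_S_smul τ).trans ?_
    rw [neg_one_mul]
    rfl
  · change jacobiTheta _ ^ 4 = -1 * τ ^ 2 * jacobiTheta τ ^ 4
    rw [jacobiTheta_S_smul, mul_pow, neg_I_mul_cpow_half_pow_four, neg_one_mul]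

theorem ncard_fiber_eq_card_filter {ι : Type*} {ν : ι → ℕ} {m n : ℕ} {s : Finset ι}
    (hs : ∀ x, ν x < n → x ∈ s) (hm : m < n) : {x | ν x = m}.ncard = (s.filter (ν · = m)).card := by
  rw [← Set.ncard_coe_finset]
  congr 1
  ext x
  simpa using fun hx : ν x = m ↦ hs x (hx ▸ hm)

theorem hasCuspCoeffs_jacobiThetaPowFour_one :
    HasCuspCoeffs 2 (jacobiThetaPowFour 1) ![1, 8, 24, 32, 24, 48, 96] := by
  have hν (n : ℤ) (hn : n.natAbs ^ 2 < 7) : n ∈ Finset.Icc (-2) 2 := by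
    have : n.natAbs < 3 := lt_of_pow_lt_pow_left₀ 2 (by norm_num) (hn.trans (by norm_num))
    rw [Finset.mem_Icc]
    lia
  have hθ : HasCuspCoeffs 2 (fun τ ↦ jacobiTheta τ) ![1, 2, 0, 0, 2, 0, 0] :=
    .of_hasSum_pow hasSum_jacobiTheta fun i ↦ by
      rw [ncard_fiber_eq_card_filter hν i.2]
      decide +revert
  have hθ₂ := hθ.mul hθ (c := ![1, 4, 4, 0, 4, 8, 0]) (by decide)
  have hpow : jacobiThetaPowFour 1 = (fun τ : ℍ ↦ jacobiTheta τ) * (fun τ : ℍ ↦ jacobiTheta τ) *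
      ((fun τ : ℍ ↦ jacobiTheta τ) * fun τ : ℍ ↦ jacobiTheta τ) := by
    funext τ
    change jacobiTheta τ ^ 4 = jacobiTheta τ * jacobiTheta τ * (jacobiTheta τ * jacobiTheta τ)
    ring
  exact hpow ▸ hθ₂.mul hθ₂ (by decide)

theorem hasCuspExpansion_qParam (h : ℝ) : HasCuspExpansion h (fun τ ↦ 𝕢 h τ) PowerSeries.X :=
  fun τ ↦ (hasSum_ite_eq 1 (𝕢 h τ)).congr_fun fun n ↦ by
    rcases eq_or_ne n 1 with rfl | hn
    · rw [PowerSeries.coeff_one_X, if_pos rfl, one_mul, pow_one]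
    · rw [PowerSeries.coeff_X, if_neg hn, if_neg hn, zero_mul]

theorem hasCuspCoeffs_jacobiThetaPowFour_zero :
    HasCuspCoeffs 2 (jacobiThetaPowFour 0) ![0, 16, 0, 64, 0, 96, 0] := by
  have hν (n : ℤ) (hn : (n ^ 2 - n).natAbs < 7) : n ∈ Finset.Icc (-2) 3 := by
    have h : n ^ 2 - n < 7 := by lia
    rw [Finset.mem_Icc]
    constructor <;> nlinarith
  have hq : HasCuspCoeffs 2 (fun τ ↦ 𝕢 2 τ) ![0, 1, 0, 0, 0, 0, 0] :=
    ⟨_, hasCuspExpansion_qParam 2, fun i ↦ by fin_cases i <;> simp [PowerSeries.coeff_X]⟩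
  set θ : ℍ → ℂ := fun τ ↦ jacobiTheta₂ (-τ / 2) τ
  have hθ : HasCuspCoeffs 2 θ ![2, 0, 2, 0, 0, 0, 2] :=
    .of_hasSum_pow hasSum_jacobiTheta₂_neg_half fun i ↦ by
      rw [ncard_fiber_eq_card_filter hν i.2]
      decide +revert
  have hθ₂ := hθ.mul hθ (c := ![4, 0, 8, 0, 4, 0, 8]) (by decide)
  have hθ₄ := hθ₂.mul hθ₂ (c := ![16, 0, 64, 0, 96, 0, 128]) (by decide)
  have hpow : jacobiThetaPowFour 0 = (fun τ : ℍ ↦ 𝕢 2 τ) * (θ * θ * (θ * θ)) := by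
    funext τ
    change 𝕢 2 τ * θ τ ^ 4 = 𝕢 2 τ * (θ τ * θ τ * (θ τ * θ τ))
    ring
  exact hpow ▸ hq.mul hθ₄ (by decide)

theorem hasCuspCoeffs_jacobiThetaPowFour_two :
    HasCuspCoeffs 2 (jacobiThetaPowFour 2) ![1, -8, 24, -32, 24, -48, 96] := by
  have hθ₄ := hasCuspCoeffs_jacobiThetaPowFour_one.one_vadd
  simp only [isThetaTriple_jacobiThetaPowFour.vadd_one] at hθ₄
  convert hθ₄ using 1
  decide

/-- The witness is `(θ₂⁴ (θ₃⁴ + θ₄⁴), θ₃⁴ (θ₂⁴ - θ₄⁴), -θ₄⁴ (θ₂⁴ + θ₃⁴))`. -/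
theorem exists_isThetaTriple_weight_four : ∃ G : Fin 3 → ℍ → ℂ, IsThetaTriple 4 (-1) G ∧
    HasCuspCoeffs 2 (G 0) ![0, 32, 0, 896, 0, 4032, 0] ∧
    HasCuspCoeffs 2 (G 1) ![-1, 16, 144, 448, 912, 2016, 4032] := by
  have hJ := isThetaTriple_jacobiThetaPowFour
  have h₀ := hasCuspCoeffs_jacobiThetaPowFour_zero
  have h₁ := hasCuspCoeffs_jacobiThetaPowFour_one
  have h₂ := hasCuspCoeffs_jacobiThetaPowFour_two
  refine ⟨_, mul_one (-1 : ℂ) ▸ hJ.mul hJ.linear_twist, ?_, ?_⟩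
  · exact h₀.mul (h₁.add h₂) (by decide)
  · exact h₁.mul (h₀.sub h₂) (by decide)

/-- The witness is the weight-four triple times the cube of `(θ₃⁴ θ₄⁴, -θ₂⁴ θ₄⁴, θ₂⁴ θ₃⁴)`. The cube
makes `G 1` vanish to order three at `i∞`, so that in a product with a series `1 + O(q⁴)`, where
`q = exp (πiτ)`, the coefficients of `q⁴`, `q⁵` and `q⁶` in that series do not affect those of the
product up to `q⁶`. -/
theorem exists_isThetaTriple_weight_sixteen : ∃ G : Fin 3 → ℍ → ℂ, IsThetaTriple 16 (-1) G ∧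
    HasCuspCoeffs 2 (G 0) ![0, 32, 0, -640, 0, -3648, 0] ∧
    HasCuspCoeffs 2 (G 1) ![0, 0, 0, 4096, -163840, 2113536, -14155776] := by
  obtain ⟨G, hG, hG₀, hG₁⟩ := exists_isThetaTriple_weight_four
  have hC := isThetaTriple_jacobiThetaPowFour.quadratic_twist
  have h₀ := hasCuspCoeffs_jacobiThetaPowFour_zero
  have h₁ := hasCuspCoeffs_jacobiThetaPowFour_one
  have h₂ := hasCuspCoeffs_jacobiThetaPowFour_two
  have hC₀ := h₁.mul h₂ (c := ![1, 0, -16, 0, 112, 0, -448]) (by decide)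
  have hC₁ := (h₀.mul h₂ (c := ![0, 16, -128, 448, -1024, 2016, -3584]) (by decide)).neg
  have hG' := ((hG.mul hC).mul hC).mul hC
  simp only [mul_one] at hG'
  refine ⟨_, hG', ?_, ?_⟩
  · have h := (hG₀.mul hC₀ (c := ![0, 32, 0, 384, 0, -6720, 0]) (by decide)).mul hC₀
      (c := ![0, 32, 0, -128, 0, -9280, 0]) (by decide)
    exact h.mul hC₀ (by decide)
  · have h := (hG₁.mul hC₁ (c := ![0, 16, -384, 192, 3072, -3360, -4608]) (by decide)).mul hC₁
      (c := ![0, 0, -256, 8192, -59392, 163840, -64512]) (by decide)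
    exact h.mul hC₁ (by decide)

namespace IsThetaTriple

variable {F : Fin 3 → ℍ → ℂ}

theorem coeff_four_eq (hF : IsThetaTriple 22 (-1) F) {a₁ a₃ a₅ b₄ b₅ b₆ : ℤ}
    (ha : HasCuspCoeffs 2 (F 0) ![0, a₁, 0, a₃, 0, a₅, 0])
    (hb : HasCuspCoeffs 2 (F 1) ![1, 0, 0, 0, b₄, b₅, b₆]) : b₄ = 6600 + 1216 * a₁ + 16 * a₃ := by
  obtain ⟨G, hG, hG₀, hG₁⟩ := exists_isThetaTriple_weight_four
  have hFG : IsThetaTriple (22 + 4) 1 (F * G) := by simpa using hF.mul hG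
  obtain ⟨M, hM⟩ := hFG.exists_modularForm (ha.mul hG₀ fun _ ↦ rfl) (hb.mul hG₁ fun _ ↦ rfl)
  have hM₀ : (qExpansion 1 M).coeff 0 = -2 := by
    rw [hM 0 0 rfl, show Finset.Iic (0 : Fin 7) = {0} by decide]
    simp
  have hM₁ : (qExpansion 1 M).coeff 1 = 32 * a₁ + 288 := by
    rw [hM 1 2 rfl, show Finset.Iic (2 : Fin 7) = {0, 1, 2} by decide]
    simp
    ring
  have hM₂ : (qExpansion 1 M).coeff 2 = 896 * a₁ + 32 * a₃ + 1824 - 2 * b₄ := by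
    rw [hM 2 4 rfl, show Finset.Iic (4 : Fin 7) = {0, 1, 2, 3, 4} by decide]
    simp
    ring
  have hM₂₆ := coeff_two_of_weight_twenty_six (by norm_num) M
  rw [hM₀, hM₁, hM₂] at hM₂₆
  have hb₄ : (b₄ : ℂ) = 6600 + 1216 * a₁ + 16 * a₃ := by linear_combination (-1 / 2) * hM₂₆
  exact_mod_cast hb₄

theorem coeff_five_eq (hF : IsThetaTriple 22 (-1) F) {a₅ b₄ b₅ b₆ : ℤ}
    (ha : HasCuspCoeffs 2 (F 0) ![0, 0, 0, 0, 0, a₅, 0])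
    (hb : HasCuspCoeffs 2 (F 1) ![1, 0, 0, 0, b₄, b₅, b₆]) : a₅ = 1622016 := by
  obtain ⟨G, hG, hG₀, hG₁⟩ := exists_isThetaTriple_weight_sixteen
  have hFG : IsThetaTriple (22 + 16) 1 (F * G) := by simpa using hF.mul hG
  obtain ⟨M, hM⟩ := hFG.exists_modularForm (ha.mul hG₀ fun _ ↦ rfl) (hb.mul hG₁ fun _ ↦ rfl)
  have hM₀ : (qExpansion 1 M).coeff 0 = 0 := by
    rw [hM 0 0 rfl, show Finset.Iic (0 : Fin 7) = {0} by decide]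
    simp
  have hM₁ : (qExpansion 1 M).coeff 1 = 0 := by
    rw [hM 1 2 rfl, show Finset.Iic (2 : Fin 7) = {0, 1, 2} by decide]
    simp
  have hM₂ : (qExpansion 1 M).coeff 2 = -327680 := by
    rw [hM 2 4 rfl, show Finset.Iic (4 : Fin 7) = {0, 1, 2, 3, 4} by decide]
    simp
    norm_num
  have hM₃ : (qExpansion 1 M).coeff 3 = 32 * a₅ - 28311552 := by
    rw [hM 3 6 rfl, show Finset.Iic (6 : Fin 7) = {0, 1, 2, 3, 4, 5, 6} by decide]
    simp
    ring
  have hM₃₈ := coeff_three_of_weight_thirty_eight (by norm_num) M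
  rw [hM₀, hM₁, hM₂, hM₃] at hM₃₈
  have ha₅ : (a₅ : ℂ) = 1622016 := by linear_combination (1 / 32) * hM₃₈
  exact_mod_cast ha₅

end IsThetaTriple

section Poisson

open MeasureTheory UnitAddTorus

variable {d : Type*}

/-- The vector of `ℝᵈ` with the given integer coordinates. -/
def intVec (m : d → ℤ) : d → ℝ := fun i ↦ m i

/-- The half-open unit cube of `ℝᵈ` with lower corner `m`. -/
def unitCell (m : d → ℤ) : Set (d → ℝ) := {x | ∀ i, x i ∈ Set.Ioc (m i : ℝ) (m i + 1)}

theorem intVec_add (m n : d → ℤ) : intVec (m + n) = intVec m + intVec n := by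
  ext i
  simp [intVec]

theorem mem_unitCell_iff_ceil {m : d → ℤ} {x : d → ℝ} :
    x ∈ unitCell m ↔ ∀ i, ⌈x i⌉ = m i + 1 := by
  simp [unitCell, Int.ceil_eq_iff]

theorem pairwise_disjoint_unitCell : Pairwise (Function.onFun Disjoint (unitCell (d := d))) := by
  intro m n hmn
  refine Set.disjoint_left.mpr fun x hm hn ↦ hmn (funext fun i ↦ ?_)
  have := mem_unitCell_iff_ceil.mp hm i
  have := mem_unitCell_iff_ceil.mp hn i
  lia

theorem iUnion_unitCell : ⋃ m, unitCell (d := d) m = Set.univ :=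
  Set.eq_univ_of_forall fun x ↦
    Set.mem_iUnion.mpr ⟨fun i ↦ ⌈x i⌉ - 1, mem_unitCell_iff_ceil.mpr (by simp)⟩

theorem preimage_add_intVec_unitCell (m : d → ℤ) : (· + intVec m) ⁻¹' unitCell m = unitCell 0 := by
  ext x
  simp [mem_unitCell_iff_ceil, intVec, add_comm]

/-- The sum of the translates of `g` by integer vectors. -/
def periodization (g : (d → ℝ) → ℂ) (x : d → ℝ) : ℂ := ∑' m : d → ℤ, g (x + intVec m)

theorem periodization_add_intVec (g : (d → ℝ) → ℂ) (x : d → ℝ) (k : d → ℤ) :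
    periodization g (x + intVec k) = periodization g x := by
  unfold periodization
  rw [← (Equiv.addLeft k).tsum_eq fun m ↦ g (x + intVec m)]
  simp only [Equiv.coe_addLeft, intVec_add, add_assoc]

theorem coe_add_intVec (x : d → ℝ) (m : d → ℤ) :
    (fun i ↦ ((x + intVec m) i : UnitAddCircle)) = fun i ↦ (x i : UnitAddCircle) := by
  ext i
  simp [intVec]

theorem exists_continuousMap_unitAddTorus {f : (d → ℝ) → ℂ} (hf : Continuous f)
    (hper : ∀ x m, f (x + intVec m) = f x) :
    ∃ Φ : C(UnitAddTorus d, ℂ), ∀ x : d → ℝ, Φ (fun i ↦ (x i : UnitAddCircle)) = f x := by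
  have hq : IsOpenQuotientMap (Pi.map fun (_ : d) (x : ℝ) ↦ (x : UnitAddCircle)) :=
    .piMap fun _ ↦ QuotientAddGroup.isOpenQuotientMap_mk
  let proj : C(d → ℝ, UnitAddTorus d) := ⟨_, hq.continuous⟩
  have hfactor : Function.FactorsThrough f proj := by
    intro x y hxy
    have hint (i : d) : ∃ k : ℤ, (k : ℝ) = x i - y i := by
      have hi : ((x i : ℝ) : UnitAddCircle) = (y i : ℝ) := congrFun hxy i
      rw [← sub_eq_zero, ← AddCircle.coe_sub, AddCircle.coe_eq_zero_iff] at hi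
      simpa using hi
    choose k hk using hint
    rw [← hper y k]
    congr 1
    ext i
    simp [intVec, hk]
  have hproj : Topology.IsQuotientMap proj := hq.isQuotientMap
  exact ⟨hproj.lift ⟨f, hf⟩ hfactor, fun x ↦ congrArg (· x) (hproj.lift_comp ⟨f, hf⟩ hfactor)⟩

theorem measurableSet_unitCell [Countable d] (m : d → ℤ) : MeasurableSet (unitCell m) := by
  have : unitCell m = Set.univ.pi fun i ↦ Set.Ioc (m i : ℝ) (m i + 1) := by
    ext
    simp [unitCell]
  exact this ▸ MeasurableSet.univ_pi fun _ ↦ measurableSet_Ioc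

variable [Fintype d]

theorem norm_le_one_of_mem_unitCell_zero {x : d → ℝ} (hx : x ∈ unitCell 0) : ‖x‖ ≤ 1 := by
  refine (pi_norm_le_iff_of_nonneg zero_le_one).mpr fun i ↦ abs_le.mpr ?_
  have := hx i
  simp only [Pi.zero_apply, Int.cast_zero, zero_add, Set.mem_Ioc] at this
  constructor <;> linarith

theorem volume_unitCell_zero_ne_top : volume (unitCell (0 : d → ℤ)) ≠ ⊤ :=
  ((Metric.isBounded_closedBall (x := (0 : d → ℝ)) (r := 1)).subset fun _ hx ↦
    mem_closedBall_zero_iff.mpr (norm_le_one_of_mem_unitCell_zero hx)).measure_lt_top.ne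

theorem hasSum_setIntegral_unitCell_zero {f : (d → ℝ) → ℂ} (hf : Integrable f) :
    HasSum (fun m ↦ ∫ x in unitCell 0, f (x + intVec m)) (∫ x, f x) := by
  have hcells := hasSum_integral_iUnion (s := unitCell (d := d)) measurableSet_unitCell
    pairwise_disjoint_unitCell hf.integrableOn
  rw [iUnion_unitCell, setIntegral_univ] at hcells
  refine hcells.congr_fun fun m ↦ ?_
  rw [← preimage_add_intVec_unitCell m]
  exact (measurePreserving_add_right volume (intVec m)).setIntegral_preimage_emb
    (measurableEmbedding_addRight _) f (unitCell m)

theorem norm_mFourier_apply (n : d → ℤ) (t : UnitAddTorus d) : ‖mFourier n t‖ = 1 := by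
  simp only [mFourier, ContinuousMap.coe_mk, fourier_apply, norm_prod, Circle.norm_coe,
    Finset.prod_const_one]

section

variable {g : (d → ℝ) → ℂ} {u : (d → ℤ) → ℝ}

theorem continuous_periodization (hg : Continuous g) (hu : Summable u)
    (hgu : ∀ m x, ‖x‖ ≤ 1 → ‖g (x + intVec m)‖ ≤ u m) : Continuous (periodization g) := by
  have hball : ContinuousOn (periodization g) (Metric.ball 0 1) :=
    continuousOn_tsum (fun m ↦ (hg.comp (continuous_add_const (intVec m))).continuousOn) hu
      fun m x hx ↦ hgu m x (mem_ball_zero_iff.mp hx).le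
  refine continuous_iff_continuousAt.mpr fun x ↦ ?_
  let k : d → ℤ := fun i ↦ -round (x i)
  have hk : x + intVec k ∈ Metric.ball 0 1 := by
    refine mem_ball_zero_iff.mpr ((pi_norm_lt_iff one_pos).mpr fun i ↦ ?_)
    have := abs_sub_round (x i)
    simp only [intVec, k, Pi.add_apply, Int.cast_neg, ← sub_eq_add_neg, Real.norm_eq_abs]
    linarith
  have hcont : ContinuousAt (fun y ↦ periodization g (y + intVec k)) x :=
    (hball.continuousAt (Metric.isOpen_ball.mem_nhds hk)).comp (f := (· + intVec k))
      (continuous_add_const _).continuousAt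
  simpa only [periodization_add_intVec] using hcont

theorem mFourierCoeff_eq_integral_of_periodization (hg : Continuous g) (hgi : Integrable g)
    (hu : Summable u) (hgu : ∀ m x, ‖x‖ ≤ 1 → ‖g (x + intVec m)‖ ≤ u m)
    {Φ : C(UnitAddTorus d, ℂ)} (hΦ : ∀ x, Φ (fun i ↦ (x i : UnitAddCircle)) = periodization g x)
    (n : d → ℤ) :
    mFourierCoeff Φ n = ∫ x : d → ℝ, mFourier (-n) (fun i ↦ (x i : UnitAddCircle)) * g x := by
  let e (x : d → ℝ) : ℂ := mFourier (-n) fun i ↦ (x i : UnitAddCircle)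
  have he : Continuous e := by fun_prop
  have hnorm (x) : ‖e x‖ = 1 := norm_mFourier_apply _ _
  have heg : Integrable fun x ↦ e x * g x :=
    hgi.bdd_mul he.aestronglyMeasurable (.of_forall fun x ↦ (hnorm x).le)
  have hcells := hasSum_setIntegral_unitCell_zero heg
  have : IsFiniteMeasure (volume.restrict (unitCell (0 : d → ℤ))) :=
    isFiniteMeasure_restrict.mpr volume_unitCell_zero_ne_top
  have hbound (m) : ∀ᵐ x ∂volume.restrict (unitCell (0 : d → ℤ)),
      ‖e (x + intVec m) * g (x + intVec m)‖ ≤ u m := by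
    filter_upwards [ae_restrict_mem (measurableSet_unitCell _)] with x hx
    rw [norm_mul, hnorm, one_mul]
    exact hgu m x (norm_le_one_of_mem_unitCell_zero hx)
  have hsum : HasSum (fun m ↦ ∫ x in unitCell 0, e (x + intVec m) * g (x + intVec m))
      (∫ x in unitCell 0, e x * periodization g x) := by
    refine hasSum_integral_of_dominated_convergence (fun m _ ↦ u m)
      (fun m ↦ (by fun_prop : Continuous _).aestronglyMeasurable) hbound (.of_forall fun _ ↦ hu)
      (integrable_const _) ?_
    filter_upwards [ae_restrict_mem (measurableSet_unitCell _)] with x hx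
    simp only [e, coe_add_intVec]
    exact (Summable.of_norm_bounded hu fun m ↦
      hgu m x (norm_le_one_of_mem_unitCell_zero hx)).hasSum.mul_left _
  rw [← hsum.unique hcells, mFourierCoeff_eq_integral _ n (intVec 0)]
  change ∫ x in unitCell 0, _ = _
  simp only [hΦ, smul_eq_mul, e]

theorem tsum_intVec_eq_tsum_integral_mFourier (hg : Continuous g) (hgi : Integrable g)
    (hu : Summable u) (hgu : ∀ m x, ‖x‖ ≤ 1 → ‖g (x + intVec m)‖ ≤ u m)
    (hs : Summable fun n : d → ℤ ↦
      ∫ x : d → ℝ, mFourier (-n) (fun i ↦ (x i : UnitAddCircle)) * g x) :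
    ∑' m : d → ℤ, g (intVec m) =
      ∑' n : d → ℤ, ∫ x : d → ℝ, mFourier (-n) (fun i ↦ (x i : UnitAddCircle)) * g x := by
  obtain ⟨Φ, hΦ⟩ := exists_continuousMap_unitAddTorus (continuous_periodization hg hu hgu)
    (periodization_add_intVec g)
  have hcoeff := mFourierCoeff_eq_integral_of_periodization hg hgi hu hgu hΦ
  have hseries := hasSum_mFourier_series_apply_of_summable (hs.congr fun n ↦ (hcoeff n).symm)
    fun i ↦ ((0 : d → ℝ) i : UnitAddCircle)
  have hone (n : d → ℤ) : mFourier n (fun i ↦ ((0 : d → ℝ) i : UnitAddCircle)) = 1 := by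
    simp [mFourier]
  simp only [hΦ, hone, smul_eq_mul, mul_one, hcoeff] at hseries
  rw [hseries.tsum_eq, periodization]
  simp only [zero_add]

end

end Poisson

theorem normOf_eq_norm_sq {n : ℕ} (x : EuclideanSpace ℝ (Fin n)) : normOf x = ‖x‖ ^ 2 :=
  real_inner_self_eq_norm_sq x

theorem exists_inner_basis_eq {ι E : Type*} [NormedAddCommGroup E] [InnerProductSpace ℝ E]
    [FiniteDimensional ℝ E] (B : Module.Basis ι ℝ E) (f : ι → ℝ) : ∃ y : E, ∀ i, ⟪y, B i⟫ = f i :=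
  ⟨(InnerProductSpace.toDual ℝ E).symm (B.constr ℝ f).toContinuousLinearMap, fun i ↦ by
    rw [InnerProductSpace.toDual_symm_apply]
    exact B.constr_basis ℝ f i⟩

theorem IsUnimodularLattice.exists_submodule_coe_eq {n : ℕ} {L : Set (EuclideanSpace ℝ (Fin n))}
    (hL : IsUnimodularLattice L) :
    ∃ Λ : Submodule ℤ (EuclideanSpace ℝ (Fin n)), (Λ : Set (EuclideanSpace ℝ (Fin n))) = L := by
  let Γ : AddSubgroup (EuclideanSpace ℝ (Fin n)) :=
    { carrier := dualSet L
      zero_mem' := fun y _ ↦ ⟨0, by simp⟩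
      add_mem' := fun {a b} ha hb y hy ↦ by
        obtain ⟨k, hk⟩ := ha y hy
        obtain ⟨l, hl⟩ := hb y hy
        exact ⟨k + l, by rw [inner_add_left, hk, hl, Int.cast_add]⟩
      neg_mem' := fun {a} ha y hy ↦ by
        obtain ⟨k, hk⟩ := ha y hy
        exact ⟨-k, by rw [inner_neg_left, hk, Int.cast_neg]⟩ }
  exact ⟨Γ.toIntSubmodule, hL.symm⟩

namespace IsUnimodularLattice

variable {n : ℕ} {Λ : Submodule ℤ (EuclideanSpace ℝ (Fin n))}
  {x y : EuclideanSpace ℝ (Fin n)}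

theorem mem_iff (hΛ : IsUnimodularLattice (Λ : Set (EuclideanSpace ℝ (Fin n)))) :
    x ∈ Λ ↔ ∀ y ∈ Λ, ∃ m : ℤ, ⟪x, y⟫ = (m : ℝ) :=
  Set.ext_iff.mp hΛ x

variable (hΛ : IsUnimodularLattice (Λ : Set (EuclideanSpace ℝ (Fin n))))
include hΛ

theorem exists_inner_eq_intCast (hx : x ∈ Λ) (hy : y ∈ Λ) : ∃ m : ℤ, ⟪x, y⟫ = (m : ℝ) :=
  hΛ.mem_iff.mp hx y hy

theorem exists_norm_sq_eq_natCast (hx : x ∈ Λ) : ∃ m : ℕ, ‖x‖ ^ 2 = (m : ℝ) := by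
  obtain ⟨m, hm⟩ := hΛ.exists_inner_eq_intCast hx hx
  rw [real_inner_self_eq_norm_sq] at hm
  have hm₀ : 0 ≤ m := by exact_mod_cast hm ▸ sq_nonneg ‖x‖
  lift m to ℕ using hm₀
  exact ⟨m, hm⟩

theorem one_le_norm (hx : x ∈ Λ) (hx₀ : x ≠ 0) : 1 ≤ ‖x‖ := by
  obtain ⟨m, hm⟩ := hΛ.exists_norm_sq_eq_natCast hx
  have hpos : (0 : ℝ) < m := hm ▸ pow_pos (norm_pos_iff.mpr hx₀) 2
  rw [← one_le_sq_iff₀ (norm_nonneg x), hm]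
  exact_mod_cast hpos

theorem discreteTopology : DiscreteTopology Λ := by
  refine discreteTopology_of_isOpen_singleton_zero (Metric.isOpen_iff.mpr fun x hx ↦
    ⟨1, one_pos, fun y hy ↦ ?_⟩)
  rw [Set.mem_singleton_iff] at hx ⊢
  subst hx
  by_contra hy₀
  exact (hΛ.one_le_norm y.2 (by simpa using hy₀)).not_gt (mem_ball_zero_iff.mp hy)

/-- A vector orthogonal to `Λ` has all its real multiples in `Λ`. -/
theorem isZLattice [DiscreteTopology Λ] : IsZLattice ℝ Λ := by
  refine ⟨(Submodule.orthogonal_eq_bot_iff.mp ((Submodule.eq_bot_iff _).mpr fun y hy ↦ ?_))⟩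
  by_contra hy₀
  have hnorm : 0 < ‖y‖ := norm_pos_iff.mpr hy₀
  have hmem : (2 * ‖y‖)⁻¹ • y ∈ Λ := hΛ.mem_iff.mpr fun x hx ↦ ⟨0, by
    rw [inner_smul_left, real_inner_comm,
      (Submodule.mem_orthogonal _ y).mp hy x (Submodule.subset_span hx)]
    simp⟩
  have hge := hΛ.one_le_norm hmem (by simp [hy₀])
  rw [norm_smul, norm_inv, norm_mul, norm_norm, mul_inv, mul_assoc,
    inv_mul_cancel₀ hnorm.ne'] at hge
  norm_num at hge

theorem mem_iff_forall_basis {ι : Type*} [Finite ι] (b : Module.Basis ι ℤ Λ) :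
    y ∈ Λ ↔ ∀ i, ∃ m : ℤ, ⟪y, (b i : EuclideanSpace ℝ (Fin n))⟫ = (m : ℝ) := by
  have := Fintype.ofFinite ι
  refine ⟨fun hy i ↦ hΛ.exists_inner_eq_intCast hy (b i).2, fun h ↦ hΛ.mem_iff.mpr fun x hx ↦ ?_⟩
  choose k hk using h
  lift x to Λ using hx
  refine ⟨∑ i, b.repr x i * k i, ?_⟩
  conv_lhs => rw [← b.sum_repr x]
  simp only [Submodule.coe_sum, Submodule.coe_smul, inner_sum, ← Int.cast_smul_eq_zsmul ℝ,
    inner_smul_right, hk]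
  push_cast
  rfl

/-- Surjectivity of `e` is where `Λ` being its own dual is used. -/
theorem exists_equiv_inner {ι : Type*} [Fintype ι] [DiscreteTopology Λ] [IsZLattice ℝ Λ]
    (b : Module.Basis ι ℤ Λ) : ∃ e : Λ ≃ (ι → ℤ), ∀ (y : Λ) (c : ι → ℝ),
      ⟪(y : EuclideanSpace ℝ (Fin n)), (b.ofZLatticeBasis ℝ Λ).equivFun.symm c⟫ =
        ∑ i, e y i * c i := by
  set B := b.ofZLatticeBasis ℝ Λ
  have hB (i) : B i = b i := b.ofZLatticeBasis_apply ℝ Λ i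
  have hpair (y : Λ) (i) := hΛ.exists_inner_eq_intCast y.2 (b i).2
  choose e he using hpair
  have hinj : Function.Injective e := fun y z hyz ↦
    Subtype.ext (InnerProductSpace.ext_inner_right_basis B fun i ↦ by rw [hB, he, he, hyz])
  have hsurj : Function.Surjective e := by
    intro k
    obtain ⟨y, hy⟩ := exists_inner_basis_eq B (fun i ↦ (k i : ℝ))
    have hyΛ : y ∈ Λ := (hΛ.mem_iff_forall_basis b).mpr fun i ↦ ⟨k i, by rw [← hB, hy]⟩
    refine ⟨⟨y, hyΛ⟩, funext fun i ↦ ?_⟩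
    exact_mod_cast (he ⟨y, hyΛ⟩ i).symm.trans ((congrArg _ (hB i).symm).trans (hy i))
  refine ⟨.ofBijective e ⟨hinj, hsurj⟩, fun y c ↦ ?_⟩
  simp only [B.equivFun_symm_apply, inner_sum, inner_smul_right, hB, he, mul_comm]
  rfl

end IsUnimodularLattice

theorem equivFun_symm_ofZLatticeBasis_intVec {ι E : Type*} [Finite ι] [NormedAddCommGroup E]
    [NormedSpace ℝ E] [FiniteDimensional ℝ E] {Λ : Submodule ℤ E} [DiscreteTopology Λ]
    [IsZLattice ℝ Λ] (b : Module.Basis ι ℤ Λ) (m : ι → ℤ) :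
    (b.ofZLatticeBasis ℝ Λ).equivFun.symm (intVec m) = b.equivFun.symm m := by
  have := Fintype.ofFinite ι
  simp only [Module.Basis.equivFun_symm_apply, intVec, Module.Basis.ofZLatticeBasis_apply,
    Submodule.coe_sum, Submodule.coe_smul, Int.cast_smul_eq_zsmul]

theorem mFourier_neg_coe {ι : Type*} [Fintype ι] (n : ι → ℤ) (x : ι → ℝ) :
    UnitAddTorus.mFourier (-n) (fun i ↦ (x i : UnitAddCircle)) =
      Complex.exp (-(2 * π * Complex.I * ↑(∑ i, n i * x i))) := by
  simp only [UnitAddTorus.mFourier, ContinuousMap.coe_mk, fourier_coe_apply, ← Complex.exp_sum]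
  push_cast
  rw [Finset.mul_sum, ← Finset.sum_neg_distrib]
  congr 1
  refine Finset.sum_congr rfl fun i _ ↦ ?_
  simp only [Pi.neg_apply, Int.cast_neg, mul_neg, neg_mul, div_one, neg_inj]
  ring

open MeasureTheory in
theorem exists_map_volume_eq_smul {ι E : Type*} [Fintype ι] [NormedAddCommGroup E]
    [InnerProductSpace ℝ E] [FiniteDimensional ℝ E] [MeasurableSpace E] [BorelSpace E]
    (A : (ι → ℝ) ≃L[ℝ] E) :
    ∃ c : NNReal, Measure.map A volume = c • (volume : Measure E) :=
  have := A.isAddHaarMeasure_map volume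
  ⟨_, Measure.isAddLeftInvariant_eq_smul (Measure.map A volume) volume⟩

open MeasureTheory in
theorem integral_comp_eq_of_map_volume_eq_smul {ι E : Type*} [Fintype ι] [NormedAddCommGroup E]
    [InnerProductSpace ℝ E] [FiniteDimensional ℝ E] [MeasurableSpace E] [BorelSpace E]
    {A : (ι → ℝ) ≃L[ℝ] E} {c : NNReal} (hc : Measure.map A volume = c • (volume : Measure E))
    (f : E → ℂ) : ∫ a, f (A a) = (c : ℝ) * ∫ v, f v := by
  have hmap := A.toHomeomorph.measurableEmbedding.integral_map (μ := volume) f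
  exact hmap.symm.trans (by
    rw [ContinuousLinearEquiv.coe_toHomeomorph, hc, integral_smul_nnreal_measure]; rfl)

namespace IsUnimodularLattice

open MeasureTheory

variable {n : ℕ} {Λ : Submodule ℤ (EuclideanSpace ℝ (Fin n))}

/-- Poisson summation, up to the covolume of `Λ`. -/
theorem exists_tsum_eq_mul_tsum_integral
    (hΛ : IsUnimodularLattice (Λ : Set (EuclideanSpace ℝ (Fin n)))) :
    ∃ C : ℝ, ∀ f : EuclideanSpace ℝ (Fin n) → ℂ, Continuous f → Integrable f →
      (∀ R, ∃ u : Λ → ℝ, Summable u ∧ ∀ (x : Λ) v, ‖v‖ ≤ R → ‖f (v + x)‖ ≤ u x) →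
      Summable (fun y : Λ ↦ ∫ v, Complex.exp (-(2 * π * Complex.I *
        (⟪(y : EuclideanSpace ℝ (Fin n)), v⟫ : ℝ))) * f v) →
      ∑' x : Λ, f x = C * ∑' y : Λ, ∫ v, Complex.exp (-(2 * π * Complex.I *
        (⟪(y : EuclideanSpace ℝ (Fin n)), v⟫ : ℝ))) * f v := by
  have := hΛ.discreteTopology
  have := hΛ.isZLattice
  have : Module.Finite ℤ Λ := ZLattice.module_finite ℝ Λ
  have : Module.Free ℤ Λ := ZLattice.module_free ℝ Λ
  let b := Module.Free.chooseBasis ℤ Λ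
  let A := (b.ofZLatticeBasis ℝ Λ).equivFunL.symm
  have hA (m) : A (intVec m) = b.equivFun.symm m := equivFun_symm_ofZLatticeBasis_intVec b m
  obtain ⟨e, he⟩ := hΛ.exists_equiv_inner b
  obtain ⟨c, hc⟩ := exists_map_volume_eq_smul A
  refine ⟨c, fun f hf hfi hfu hs ↦ ?_⟩
  have hcoeff (k) : ∫ a, UnitAddTorus.mFourier (-k) (fun i ↦ (a i : UnitAddCircle)) * f (A a) =
      (c : ℝ) * ∫ v, Complex.exp (-(2 * π * Complex.I *
        (⟪(e.symm k : EuclideanSpace ℝ (Fin n)), v⟫ : ℝ))) * f v := by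
    rw [← integral_comp_eq_of_map_volume_eq_smul hc]
    refine integral_congr_ae (.of_forall fun a ↦ ?_)
    have hinner := he (e.symm k) a
    rw [e.apply_symm_apply] at hinner
    simp only [mFourier_neg_coe, ← hinner]
    rfl
  obtain ⟨u, hu, hfu⟩ := hfu ‖A.toContinuousLinearMap‖
  have hbound (m) (a) (ha : ‖a‖ ≤ 1) : ‖f (A (a + intVec m))‖ ≤ u (b.equivFun.symm m) := by
    rw [map_add, hA]
    exact hfu _ _ (A.toContinuousLinearMap.unit_le_opNorm a ha)
  have hfAi : Integrable fun a ↦ f (A a) := by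
    refine (A.toHomeomorph.measurableEmbedding.integrable_map_iff (g := f)).mp ?_
    rw [ContinuousLinearEquiv.coe_toHomeomorph, hc]
    exact hfi.smul_measure_nnreal
  have hpoisson := tsum_intVec_eq_tsum_integral_mFourier (hf.comp A.continuous) hfAi
    (b.equivFun.symm.toEquiv.summable_iff.mpr hu) hbound
    (((e.symm.summable_iff.mpr hs).mul_left (c : ℂ)).congr fun k ↦ (hcoeff k).symm)
  simp only [hcoeff, Function.comp_apply, hA, tsum_mul_left] at hpoisson
  rw [← b.equivFun.symm.toEquiv.tsum_eq, ← e.symm.tsum_eq]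
  exact hpoisson

end IsUnimodularLattice

section Gaussian

theorem summable_exp_neg_mul_norm_sq {E : Type*} [NormedAddCommGroup E] [NormedSpace ℝ E]
    [FiniteDimensional ℝ E] (Λ : Submodule ℤ E) [DiscreteTopology Λ] {r : ℝ} (hr : 0 < r) :
    Summable fun x : Λ ↦ Real.exp (-r * ‖(x : E)‖ ^ 2) := by
  set k := Module.finrank ℤ Λ + 1
  have hpow := ZLattice.summable_norm_pow_inv Λ (2 * k) (by lia)
  refine .of_norm_bounded_eventually (hpow.mul_left (k.factorial / r ^ k)) ?_
  filter_upwards [(Set.finite_singleton (0 : Λ)).compl_mem_cofinite] with x hx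
  have hnorm : 0 < ‖(x : E)‖ := norm_pos_iff.mpr (by simpa using hx)
  have hexp := Real.pow_div_factorial_le_exp (r * ‖(x : E)‖ ^ 2) (by positivity) k
  rw [Real.norm_eq_abs, Real.abs_exp, neg_mul, Real.exp_neg]
  refine (inv_anti₀ (by positivity) hexp).trans_eq ?_
  rw [inv_div, mul_pow, ← pow_mul, inv_pow, ← div_eq_mul_inv, div_div, Submodule.coe_norm]

theorem norm_sq_div_two_sub_norm_sq_le {E : Type*} [SeminormedAddCommGroup E] (x y : E) :
    ‖x‖ ^ 2 / 2 - ‖y‖ ^ 2 ≤ ‖x + y‖ ^ 2 := by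
  have hx : ‖x‖ ≤ ‖x + y‖ + ‖y‖ := by simpa using norm_sub_le (x + y) y
  nlinarith [sq_nonneg (‖x + y‖ - ‖y‖), norm_nonneg x, norm_nonneg y, norm_nonneg (x + y)]

theorem exp_neg_mul_norm_add_sq_le {E : Type*} [SeminormedAddCommGroup E] {r R : ℝ} (hr : 0 < r)
    (x : E) {y : E} (hy : ‖y‖ ≤ R) :
    Real.exp (-r * ‖x + y‖ ^ 2) ≤ Real.exp (r * R ^ 2) * Real.exp (-(r / 2) * ‖x‖ ^ 2) := by
  rw [← Real.exp_add, Real.exp_le_exp]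
  nlinarith [norm_sq_div_two_sub_norm_sq_le x y, pow_le_pow_left₀ (norm_nonneg y) hy 2]

theorem summable_exp_neg_mul_norm_add_sq {E : Type*} [NormedAddCommGroup E] [NormedSpace ℝ E]
    [FiniteDimensional ℝ E] (Λ : Submodule ℤ E) [DiscreteTopology Λ] (s : E) {r : ℝ} (hr : 0 < r) :
    Summable fun x : Λ ↦ Real.exp (-r * ‖(x : E) + s‖ ^ 2) :=
  .of_nonneg_of_le (fun _ ↦ (Real.exp_pos _).le)
    (fun x ↦ exp_neg_mul_norm_add_sq_le hr (x : E) le_rfl)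
    ((summable_exp_neg_mul_norm_sq Λ (half_pos hr)).mul_left _)

theorem norm_cexp_neg_mul_norm_sq {E : Type*} [SeminormedAddCommGroup E] (β : ℂ) (x : E) :
    ‖Complex.exp (-β * ‖x‖ ^ 2)‖ = Real.exp (-β.re * ‖x‖ ^ 2) := by
  rw [Complex.norm_exp, ← Complex.ofReal_pow, Complex.re_mul_ofReal, Complex.neg_re]

theorem integral_cexp_inner_mul_cexp_neg_mul_norm_add_sq {E : Type*} [NormedAddCommGroup E]
    [InnerProductSpace ℝ E] [FiniteDimensional ℝ E] [MeasurableSpace E] [BorelSpace E]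
    {β : ℂ} (hβ : 0 < β.re) (s y : E) :
    ∫ v : E, Complex.exp (-(2 * π * Complex.I * (⟪y, v⟫ : ℝ))) *
        Complex.exp (-β * ‖v + s‖ ^ 2) =
      (π / β) ^ (Module.finrank ℝ E / 2 : ℂ) * (Complex.exp (2 * π * Complex.I * (⟪y, s⟫ : ℝ)) *
        Complex.exp (-π ^ 2 * ‖y‖ ^ 2 / β)) := by
  rw [mul_left_comm, ← fourier_gaussian_innerProductSpace hβ y, Real.fourier_eq',
    ← MeasureTheory.integral_const_mul, ← MeasureTheory.integral_sub_right_eq_self _ s]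
  refine MeasureTheory.integral_congr_ae (.of_forall fun v ↦ ?_)
  simp only [sub_add_cancel, smul_eq_mul, ← Complex.exp_add]
  congr 1
  rw [inner_sub_right, real_inner_comm v y]
  push_cast
  ring

end Gaussian

namespace IsUnimodularLattice

variable {n : ℕ} {Λ : Submodule ℤ (EuclideanSpace ℝ (Fin n))}

theorem summable_cexp_inner_mul_cexp
    (hΛ : IsUnimodularLattice (Λ : Set (EuclideanSpace ℝ (Fin n)))) {β : ℂ} (hβ : 0 < β.re)
    (s : EuclideanSpace ℝ (Fin n)) :
    Summable fun y : Λ ↦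
      Complex.exp (2 * π * Complex.I * (⟪(y : EuclideanSpace ℝ (Fin n)), s⟫ : ℝ)) *
        Complex.exp (-β * ‖(y : EuclideanSpace ℝ (Fin n))‖ ^ 2) := by
  have := hΛ.discreteTopology
  refine .of_norm_bounded (summable_exp_neg_mul_norm_sq Λ hβ) fun y ↦ le_of_eq ?_
  rw [norm_mul, norm_cexp_neg_mul_norm_sq, mul_right_comm, mul_comm _ Complex.I]
  norm_cast
  rw [mul_comm Complex.I, Complex.norm_exp_ofReal_mul_I, one_mul]

theorem exists_tsum_cexp_neg_mul_norm_add_sq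
    (hΛ : IsUnimodularLattice (Λ : Set (EuclideanSpace ℝ (Fin n)))) :
    ∃ C : ℝ, ∀ (β : ℂ) (s : EuclideanSpace ℝ (Fin n)), 0 < β.re →
      ∑' x : Λ, Complex.exp (-β * ‖(x : EuclideanSpace ℝ (Fin n)) + s‖ ^ 2) =
        C * ((π / β) ^ (n / 2 : ℂ) * ∑' y : Λ,
          Complex.exp (2 * π * Complex.I * (⟪(y : EuclideanSpace ℝ (Fin n)), s⟫ : ℝ)) *
            Complex.exp (-π ^ 2 * ‖(y : EuclideanSpace ℝ (Fin n))‖ ^ 2 / β)) := by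
  obtain ⟨C, hC⟩ := hΛ.exists_tsum_eq_mul_tsum_integral
  refine ⟨C, fun β s hβ ↦ ?_⟩
  have := hΛ.discreteTopology
  have hβinv : 0 < (π ^ 2 / β).re := by
    have hβ₀ : β ≠ 0 := fun h ↦ by simp [h] at hβ
    rw [div_eq_mul_inv, ← Complex.ofReal_pow, Complex.re_ofReal_mul, Complex.inv_re]
    exact mul_pos (by positivity) (div_pos hβ (Complex.normSq_pos.mpr hβ₀))
  have hint : MeasureTheory.Integrable
      fun v : EuclideanSpace ℝ (Fin n) ↦ Complex.exp (-β * ‖v + s‖ ^ 2) := by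
    have hcentered := GaussianFourier.integrable_cexp_neg_mul_sq_norm_add hβ 0
      (0 : EuclideanSpace ℝ (Fin n))
    simp only [zero_mul, add_zero] at hcentered
    exact hcentered.comp_add_right s
  have hpoisson := hC (fun v ↦ Complex.exp (-β * ‖v + s‖ ^ 2)) (by fun_prop) hint
    (fun R ↦ ⟨_, (summable_exp_neg_mul_norm_sq Λ (half_pos hβ)).mul_left
      (Real.exp (β.re * (R + ‖s‖) ^ 2)), fun x v hv ↦ ?_⟩) ?_
  · simpa only [integral_cexp_inner_mul_cexp_neg_mul_norm_add_sq hβ, finrank_euclideanSpace_fin,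
      tsum_mul_left] using hpoisson
  · rw [norm_cexp_neg_mul_norm_sq, add_comm v, add_assoc]
    exact exp_neg_mul_norm_add_sq_le hβ _ ((norm_add_le v s).trans (by gcongr))
  · simp only [integral_cexp_inner_mul_cexp_neg_mul_norm_add_sq hβ]
    refine .mul_left _ ((hΛ.summable_cexp_inner_mul_cexp hβinv s).congr fun y ↦ ?_)
    ring_nf

/-- The theta inversion formula. Comparing both sides at `s = 0`, `β = π` shows that the covolume of
a unimodular lattice is one. -/
theorem tsum_cexp_neg_mul_norm_add_sq
    (hΛ : IsUnimodularLattice (Λ : Set (EuclideanSpace ℝ (Fin n)))) {β : ℂ} (hβ : 0 < β.re)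
    (s : EuclideanSpace ℝ (Fin n)) :
    ∑' x : Λ, Complex.exp (-β * ‖(x : EuclideanSpace ℝ (Fin n)) + s‖ ^ 2) =
      (π / β) ^ (n / 2 : ℂ) * ∑' y : Λ,
        Complex.exp (2 * π * Complex.I * (⟪(y : EuclideanSpace ℝ (Fin n)), s⟫ : ℝ)) *
          Complex.exp (-π ^ 2 * ‖(y : EuclideanSpace ℝ (Fin n))‖ ^ 2 / β) := by
  obtain ⟨C, hC⟩ := hΛ.exists_tsum_cexp_neg_mul_norm_add_sq
  suffices C = 1 by simpa [this] using hC β s hβ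
  have := hΛ.discreteTopology
  have hpos : 0 < ∑' y : Λ, Real.exp (-π * ‖(y : EuclideanSpace ℝ (Fin n))‖ ^ 2) :=
    (summable_exp_neg_mul_norm_sq Λ Real.pi_pos).tsum_pos (fun _ ↦ (Real.exp_pos _).le) 0
      (Real.exp_pos _)
  have hfixed := hC π 0 (by simpa using Real.pi_pos)
  have hquot (y : Λ) : -(π : ℂ) ^ 2 * ‖(y : EuclideanSpace ℝ (Fin n))‖ ^ 2 / π =
      -π * ‖(y : EuclideanSpace ℝ (Fin n))‖ ^ 2 := by
    field_simp
  have hπ : (π : ℂ) ≠ 0 := by exact_mod_cast Real.pi_ne_zero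
  simp only [add_zero, inner_zero_right, Complex.ofReal_zero, mul_zero, Complex.exp_zero, one_mul,
    div_self hπ, Complex.one_cpow, hquot] at hfixed
  norm_cast at hfixed
  exact (mul_eq_right₀ hpos.ne').mp hfixed.symm

end IsUnimodularLattice

/-- `s` is half of a characteristic vector of `Λ`: the norms of the vectors `x` of `Λ` are congruent
to `⟪x, 2 • s⟫` modulo `2`. For an odd unimodular lattice these `s` make up the shadow. -/
def IsHalfCharacteristic {n : ℕ} (Λ : Submodule ℤ (EuclideanSpace ℝ (Fin n)))
    (s : EuclideanSpace ℝ (Fin n)) : Prop :=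
  ∀ x ∈ Λ, ∃ m : ℤ, 2 * ⟪x, s⟫ = ‖x‖ ^ 2 + 2 * m

namespace IsUnimodularLattice

variable {n : ℕ} {Λ : Submodule ℤ (EuclideanSpace ℝ (Fin n))} {s w x : EuclideanSpace ℝ (Fin n)}
  (hΛ : IsUnimodularLattice (Λ : Set (EuclideanSpace ℝ (Fin n))))

include hΛ

/-- Modulo `2`, the map `x ↦ ‖x‖ ^ 2` is additive on `Λ`, so it suffices to choose `⟪b i, s⟫` on a
basis. -/
theorem exists_isHalfCharacteristic : ∃ s, IsHalfCharacteristic Λ s := by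
  have := hΛ.discreteTopology
  have := hΛ.isZLattice
  let b := Module.Free.chooseBasis ℤ Λ
  let B := b.ofZLatticeBasis ℝ Λ
  obtain ⟨s, hs⟩ := exists_inner_basis_eq B fun i ↦ ‖B i‖ ^ 2 / 2
  have hspan : Submodule.span ℤ (Set.range B) = Λ := b.ofZLatticeBasis_span ℝ
  refine ⟨s, fun x hx ↦ ?_⟩
  have hclosure : AddSubgroup.closure (Set.range B) = Λ.toAddSubgroup := by
    rw [← Submodule.span_int_eq_addSubgroupClosure, hspan]
  rw [← Submodule.mem_toAddSubgroup, ← hclosure] at hx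
  induction hx using AddSubgroup.closure_induction with
  | mem x hx =>
    obtain ⟨i, rfl⟩ := hx
    refine ⟨0, ?_⟩
    rw [real_inner_comm, hs]
    push_cast
    ring
  | zero => exact ⟨0, by simp⟩
  | add y z hy hz ihy ihz =>
    rw [hclosure] at hy hz
    obtain ⟨m, hm⟩ := ihy
    obtain ⟨l, hl⟩ := ihz
    obtain ⟨k, hk⟩ := hΛ.exists_inner_eq_intCast hy hz
    refine ⟨m + l - k, ?_⟩
    rw [inner_add_left, norm_add_sq_real, hk]
    push_cast
    linarith
  | neg y hy ihy =>
    rw [hclosure] at hy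
    obtain ⟨m, hm⟩ := ihy
    obtain ⟨k, hk⟩ := hΛ.exists_norm_sq_eq_natCast hy
    refine ⟨-m - k, ?_⟩
    rw [inner_neg_left, norm_neg]
    push_cast
    linarith

theorem isHalfCharacteristic_iff_sub_mem (hs : IsHalfCharacteristic Λ s) :
    IsHalfCharacteristic Λ w ↔ w - s ∈ Λ := by
  rw [hΛ.mem_iff]
  constructor
  · intro hw y hy
    obtain ⟨m, hm⟩ := hw y hy
    obtain ⟨k, hk⟩ := hs y hy
    refine ⟨m - k, ?_⟩
    rw [real_inner_comm, inner_sub_right]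
    push_cast
    linarith
  · intro hws y hy
    obtain ⟨m, hm⟩ := hws y hy
    obtain ⟨k, hk⟩ := hs y hy
    refine ⟨m + k, ?_⟩
    rw [real_inner_comm, inner_sub_right] at hm
    push_cast
    linarith

theorem mem_of_mem_dualSet_evenSublattice {m : ℤ} (hx : x ∈ Λ) (hxm : ‖x‖ ^ 2 = m) (hm : Odd m)
    (hw : w ∈ dualSet (evenSublattice (Λ : Set (EuclideanSpace ℝ (Fin n)))))
    (hwx : ∃ k : ℤ, ⟪w, x⟫ = k) : w ∈ Λ := by
  refine hΛ.mem_iff.mpr fun y hy ↦ ?_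
  obtain ⟨k, hk⟩ := hΛ.exists_norm_sq_eq_natCast hy
  rcases Nat.even_or_odd' k with ⟨j, rfl | rfl⟩
  · exact hw y ⟨hy, j, by rw [normOf_eq_norm_sq, hk]; push_cast; rfl⟩
  · obtain ⟨p, rfl⟩ := hm
    obtain ⟨q, hq⟩ := hΛ.exists_inner_eq_intCast hy hx
    obtain ⟨u, hu⟩ := hw (y - x) ⟨Λ.sub_mem hy hx, j + p + 1 - q, by
      rw [normOf_eq_norm_sq, norm_sub_sq_real, hk, hxm, hq]
      push_cast
      ring⟩
    obtain ⟨v, hv⟩ := hwx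
    refine ⟨u + v, ?_⟩
    rw [inner_sub_right] at hu
    push_cast
    linarith

theorem isHalfCharacteristic_of_mem_shadow
    (hw : w ∈ shadow (Λ : Set (EuclideanSpace ℝ (Fin n)))) : IsHalfCharacteristic Λ w := by
  intro x hx
  obtain ⟨k, hk⟩ := hΛ.exists_norm_sq_eq_natCast hx
  rcases Nat.even_or_odd' k with ⟨j, rfl | rfl⟩
  · obtain ⟨m, hm⟩ := hw.1 x ⟨hx, j, by rw [normOf_eq_norm_sq, hk]; push_cast; rfl⟩
    refine ⟨m - j, ?_⟩
    rw [real_inner_comm, hm, hk]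
    push_cast
    ring
  · obtain ⟨m, hm⟩ := hw.1 ((2 : ℤ) • x) ⟨Λ.smul_mem 2 hx, 2 * (2 * j + 1), by
      rw [normOf_eq_norm_sq, ← Int.cast_smul_eq_zsmul ℝ, norm_smul, mul_pow, hk]
      norm_num
      ring⟩
    rw [← Int.cast_smul_eq_zsmul ℝ, real_inner_smul_right, real_inner_comm] at hm
    push_cast at hm
    rcases Int.even_or_odd' m with ⟨i, rfl | rfl⟩
    · refine absurd ?_ hw.2
      refine hΛ.mem_of_mem_dualSet_evenSublattice (m := 2 * j + 1) hx (by exact_mod_cast hk)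
        (odd_two_mul_add_one _) hw.1 ⟨i, ?_⟩
      rw [real_inner_comm]
      push_cast at hm
      linarith
    · refine ⟨i - j, ?_⟩
      rw [hm, hk]
      push_cast
      ring

theorem mem_shadow_iff (hodd : IsOddLattice (Λ : Set (EuclideanSpace ℝ (Fin n)))) :
    w ∈ shadow (Λ : Set (EuclideanSpace ℝ (Fin n))) ↔ IsHalfCharacteristic Λ w := by
  refine ⟨hΛ.isHalfCharacteristic_of_mem_shadow, fun hw ↦ ⟨?_, fun hwΛ ↦ ?_⟩⟩
  · rintro y ⟨hy, j, hj⟩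
    obtain ⟨m, hm⟩ := hw y hy
    rw [normOf_eq_norm_sq] at hj
    refine ⟨j + m, ?_⟩
    rw [real_inner_comm]
    push_cast
    linarith
  · obtain ⟨x, hx, k, hk, hxk⟩ := hodd
    obtain ⟨m, hm⟩ := hw x hx
    obtain ⟨j, hj⟩ := hΛ.exists_inner_eq_intCast hx hwΛ
    rw [← normOf_eq_norm_sq, hxk, hj] at hm
    have hparity : 2 * j = k + 2 * m := by exact_mod_cast hm
    obtain ⟨i, rfl⟩ := hk
    lia

theorem shadow_eq_vadd (hodd : IsOddLattice (Λ : Set (EuclideanSpace ℝ (Fin n))))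
    (hs : IsHalfCharacteristic Λ s) :
    shadow (Λ : Set (EuclideanSpace ℝ (Fin n))) = s +ᵥ (Λ : Set (EuclideanSpace ℝ (Fin n))) := by
  ext w
  rw [hΛ.mem_shadow_iff hodd, hΛ.isHalfCharacteristic_iff_sub_mem hs,
    Set.mem_vadd_set_iff_neg_vadd_mem, vadd_eq_add, neg_add_eq_sub, SetLike.mem_coe]

end IsUnimodularLattice

/-- The theta series `∑ exp (πi τ (x, x))` of a set `A` of vectors. -/
def thetaSeries {n : ℕ} (A : Set (EuclideanSpace ℝ (Fin n))) (τ : ℍ) : ℂ :=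
  ∑' x : A, Complex.exp (π * Complex.I * τ * ‖(x : EuclideanSpace ℝ (Fin n))‖ ^ 2)

theorem thetaSeries_vadd {n : ℕ} (Λ : Submodule ℤ (EuclideanSpace ℝ (Fin n)))
    (s : EuclideanSpace ℝ (Fin n)) (τ : ℍ) :
    thetaSeries (s +ᵥ (Λ : Set (EuclideanSpace ℝ (Fin n)))) τ =
      ∑' x : Λ, Complex.exp (π * Complex.I * τ * ‖(x : EuclideanSpace ℝ (Fin n)) + s‖ ^ 2) := by
  refine (tsum_image (g := (s +ᵥ ·)) (fun v ↦ Complex.exp (π * Complex.I * τ * ‖v‖ ^ 2))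
    (AddAction.injective s).injOn).trans (tsum_congr fun x ↦ ?_)
  rw [vadd_eq_add, add_comm s]

theorem neg_I_mul_cpow_half_mul (z : ℂ) (j : ℕ) :
    (-Complex.I * z) ^ ((4 * j : ℕ) / 2 : ℂ) = (-1) ^ j * z ^ (2 * j) := by
  have hexponent : ((4 * j : ℕ) / 2 : ℂ) = (2 * j : ℕ) := by
    push_cast
    ring
  rw [hexponent, Complex.cpow_natCast, mul_pow, pow_mul, neg_sq, Complex.I_sq]

theorem mul_cpow_of_re_pos {z w : ℂ} (hz : 0 < z.re) (hw : 0 < w.re) (c : ℂ) :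
    (z * w) ^ c = z ^ c * w ^ c := by
  have hz₀ : z ≠ 0 := fun h ↦ by simp [h] at hz
  have hw₀ : w ≠ 0 := fun h ↦ by simp [h] at hw
  have hzarg := abs_lt.mp (Complex.abs_arg_lt_pi_div_two_iff.mpr (.inl hz))
  have hwarg := abs_lt.mp (Complex.abs_arg_lt_pi_div_two_iff.mpr (.inl hw))
  rw [Complex.cpow_def_of_ne_zero (mul_ne_zero hz₀ hw₀), Complex.cpow_def_of_ne_zero hz₀,
    Complex.cpow_def_of_ne_zero hw₀, ← Complex.exp_add,
    Complex.log_mul hz₀ hw₀ ⟨by linarith, by linarith⟩, add_mul]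

theorem one_add_I_div_two_cpow_mul_one_add_I_cpow (c : ℂ) :
    ((1 + Complex.I) / 2) ^ c * (1 + Complex.I) ^ c = Complex.exp (π * Complex.I * (c / 2)) := by
  have hmul : (1 + Complex.I) / 2 * (1 + Complex.I) = Complex.I := by
    linear_combination Complex.I_sq / 2
  rw [← mul_cpow_of_re_pos (by simp) (by simp), hmul,
    Complex.cpow_def_of_ne_zero Complex.I_ne_zero, Complex.log_I]
  ring_nf

theorem one_vadd_S_smul_one_vadd (τ : ℍ) :
    (1 : ℝ) +ᵥ ModularGroup.S • ((1 : ℝ) +ᵥ τ) =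
      ModularGroup.S • ((-1 : ℝ) +ᵥ ModularGroup.S • τ) := by
  have hτ := ne_zero τ
  have hτ₁ := ne_zero ((1 : ℝ) +ᵥ τ)
  ext
  rw [coe_vadd] at hτ₁
  rw [coe_vadd, coe_S_smul, coe_S_smul, coe_vadd, coe_vadd, coe_S_smul]
  push_cast at hτ₁ ⊢
  have hinv : -(-1 + (-τ : ℂ)⁻¹) = (1 + τ) / τ := by
    field_simp
    ring
  rw [hinv, inv_neg]
  field_simp
  ring

theorem neg_I_mul_S_smul_one_vadd_I :
    -Complex.I * (ModularGroup.S • ((1 : ℝ) +ᵥ UpperHalfPlane.I) : ℍ) = (1 + Complex.I) / 2 := by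
  have hcoe : (-((1 : ℝ) +ᵥ UpperHalfPlane.I : ℍ) : ℂ)⁻¹ = (-1 + Complex.I) / 2 := by
    refine inv_eq_of_mul_eq_one_right ?_
    rw [coe_vadd, coe_I]
    push_cast
    linear_combination (-1 / 2) * Complex.I_sq
  rw [coe_S_smul, hcoe]
  linear_combination (-1 / 2) * Complex.I_sq

theorem neg_I_mul_neg_one_vadd_I :
    -Complex.I * ((-1 : ℝ) +ᵥ UpperHalfPlane.I : ℍ) = 1 + Complex.I := by
  rw [coe_vadd, coe_I]
  push_cast
  linear_combination -Complex.I_sq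

namespace IsUnimodularLattice

variable {n : ℕ} {Λ : Submodule ℤ (EuclideanSpace ℝ (Fin n))} {s : EuclideanSpace ℝ (Fin n)}
  (hΛ : IsUnimodularLattice (Λ : Set (EuclideanSpace ℝ (Fin n))))

include hΛ

theorem thetaSeries_vadd_S_smul (s : EuclideanSpace ℝ (Fin n)) (τ : ℍ) :
    thetaSeries (s +ᵥ (Λ : Set (EuclideanSpace ℝ (Fin n)))) (ModularGroup.S • τ) =
      (-Complex.I * τ) ^ (n / 2 : ℂ) * ∑' y : Λ,
        Complex.exp (2 * π * Complex.I * (⟪(y : EuclideanSpace ℝ (Fin n)), s⟫ : ℝ)) *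
          Complex.exp (π * Complex.I * τ * ‖(y : EuclideanSpace ℝ (Fin n))‖ ^ 2) := by
  have hτ := ne_zero τ
  have hβ : 0 < (-(π * Complex.I * (ModularGroup.S • τ : ℍ))).re := by
    simpa using mul_pos Real.pi_pos (ModularGroup.S • τ).im_pos
  have h := hΛ.tsum_cexp_neg_mul_norm_add_sq hβ s
  have hcoe : ((ModularGroup.S • τ : ℍ) : ℂ) = -(τ : ℂ)⁻¹ := by
    rw [coe_S_smul, inv_neg]
  have hfactor : π / -(π * Complex.I * -(τ : ℂ)⁻¹) = -Complex.I * τ := by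
    have hπ : (π : ℂ) ≠ 0 := mod_cast Real.pi_ne_zero
    field_simp
    rw [Complex.I_sq, neg_neg]
  have hexp (y : Λ) : -(π : ℂ) ^ 2 * ‖(y : EuclideanSpace ℝ (Fin n))‖ ^ 2 /
      -(π * Complex.I * -(τ : ℂ)⁻¹) = π * Complex.I * τ * ‖(y : EuclideanSpace ℝ (Fin n))‖ ^ 2 := by
    rw [mul_div_right_comm, sq, ← neg_mul, mul_div_assoc, hfactor]
    ring
  rw [hcoe, neg_neg] at h
  rw [thetaSeries_vadd, hcoe, h]
  simp only [hfactor, hexp]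

theorem thetaSeries_S_smul (τ : ℍ) :
    thetaSeries (Λ : Set (EuclideanSpace ℝ (Fin n))) (ModularGroup.S • τ) =
      (-Complex.I * τ) ^ (n / 2 : ℂ) * thetaSeries (Λ : Set (EuclideanSpace ℝ (Fin n))) τ := by
  have h := hΛ.thetaSeries_vadd_S_smul 0 τ
  simp only [zero_vadd, inner_zero_right, Complex.ofReal_zero, mul_zero, Complex.exp_zero,
    one_mul] at h
  exact h

theorem thetaSeries_two_vadd (τ : ℍ) :
    thetaSeries (Λ : Set (EuclideanSpace ℝ (Fin n))) ((2 : ℝ) +ᵥ τ) =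
      thetaSeries (Λ : Set (EuclideanSpace ℝ (Fin n))) τ := by
  refine tsum_congr fun x ↦ ?_
  obtain ⟨m, hm⟩ := hΛ.exists_norm_sq_eq_natCast x.2
  rw [← Complex.ofReal_pow, hm, Complex.exp_eq_exp_iff_exists_int, coe_vadd]
  refine ⟨m, ?_⟩
  push_cast
  ring

theorem thetaSeries_vadd_one_vadd (hs : IsHalfCharacteristic Λ s) (τ : ℍ) :
    thetaSeries (s +ᵥ (Λ : Set (EuclideanSpace ℝ (Fin n)))) ((1 : ℝ) +ᵥ τ) =
      Complex.exp (π * Complex.I * ‖s‖ ^ 2) *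
        thetaSeries (s +ᵥ (Λ : Set (EuclideanSpace ℝ (Fin n)))) τ := by
  rw [thetaSeries_vadd, thetaSeries_vadd, ← tsum_mul_left]
  refine tsum_congr fun x ↦ ?_
  obtain ⟨m, hm⟩ := hs x x.2
  obtain ⟨k, hk⟩ := hΛ.exists_norm_sq_eq_natCast x.2
  have hnorm : ‖(x : EuclideanSpace ℝ (Fin n)) + s‖ ^ 2 = ‖s‖ ^ 2 + 2 * (k + m) := by
    rw [norm_add_sq_real]
    linarith
  have hnorm' := congrArg ((↑) : ℝ → ℂ) hnorm
  push_cast at hnorm'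
  rw [← Complex.exp_add, Complex.exp_eq_exp_iff_exists_int, coe_vadd]
  refine ⟨k + m, ?_⟩
  push_cast
  linear_combination π * Complex.I * hnorm'

/-- For a half-characteristic vector `s`, inversion sends the character `⟪·, s⟫` to translation. -/
theorem thetaSeries_vadd_S_smul_of_isHalfCharacteristic (hs : IsHalfCharacteristic Λ s) (τ : ℍ) :
    thetaSeries (s +ᵥ (Λ : Set (EuclideanSpace ℝ (Fin n)))) (ModularGroup.S • τ) =
      (-Complex.I * τ) ^ (n / 2 : ℂ) *
        thetaSeries (Λ : Set (EuclideanSpace ℝ (Fin n))) ((1 : ℝ) +ᵥ τ) := by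
  rw [hΛ.thetaSeries_vadd_S_smul]
  congr 1
  refine tsum_congr fun x ↦ ?_
  obtain ⟨m, hm⟩ := hs x x.2
  have hm' := congrArg ((↑) : ℝ → ℂ) hm
  push_cast at hm'
  rw [← Complex.exp_add, Complex.exp_eq_exp_iff_exists_int, coe_vadd]
  refine ⟨m, ?_⟩
  push_cast
  linear_combination π * Complex.I * hm'

theorem thetaSeries_vadd_I_ne_zero (s : EuclideanSpace ℝ (Fin n)) :
    thetaSeries (s +ᵥ (Λ : Set (EuclideanSpace ℝ (Fin n)))) UpperHalfPlane.I ≠ 0 := by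
  have := hΛ.discreteTopology
  have hpos := (summable_exp_neg_mul_norm_add_sq Λ s Real.pi_pos).tsum_pos
    (fun _ ↦ (Real.exp_pos _).le) 0 (Real.exp_pos _)
  have hterm (x : Λ) : π * Complex.I * (UpperHalfPlane.I : ℍ) *
      ‖(x : EuclideanSpace ℝ (Fin n)) + s‖ ^ 2 =
        (-π * ‖(x : EuclideanSpace ℝ (Fin n)) + s‖ ^ 2 : ℝ) := by
    rw [coe_I, mul_assoc (π : ℂ), Complex.I_mul_I]
    push_cast
    ring
  rw [thetaSeries_vadd, tsum_congr fun x ↦ congrArg Complex.exp (hterm x)]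
  exact_mod_cast hpos.ne'

/-- Van der Blij's lemma. The theta series of `s +ᵥ Λ` is evaluated at `1 + i` in two ways: as a
translate of `i`, and by two inversions, from `(-1 + i) / 2` and from `-1 + i`. -/
theorem cexp_pi_mul_I_mul_norm_sq_of_isHalfCharacteristic (hs : IsHalfCharacteristic Λ s) :
    Complex.exp (π * Complex.I * ‖s‖ ^ 2) = Complex.exp (π * Complex.I * (n / 4)) := by
  set i : ℍ := UpperHalfPlane.I
  have hi : ModularGroup.S • i = i := by
    ext
    rw [coe_S_smul, coe_I, inv_neg, Complex.inv_I, neg_neg]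
  have hinv : thetaSeries (s +ᵥ (Λ : Set (EuclideanSpace ℝ (Fin n)))) i =
      thetaSeries (Λ : Set (EuclideanSpace ℝ (Fin n))) ((1 : ℝ) +ᵥ i) := by
    have h := hΛ.thetaSeries_vadd_S_smul_of_isHalfCharacteristic hs i
    rwa [hi, coe_I, neg_mul, Complex.I_mul_I, neg_neg, Complex.one_cpow, one_mul] at h
  refine mul_right_cancel₀ (hΛ.thetaSeries_vadd_I_ne_zero s) ?_
  calc Complex.exp (π * Complex.I * ‖s‖ ^ 2) *
        thetaSeries (s +ᵥ (Λ : Set (EuclideanSpace ℝ (Fin n)))) i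
    _ = thetaSeries (s +ᵥ (Λ : Set (EuclideanSpace ℝ (Fin n)))) (ModularGroup.S •
        ModularGroup.S • ((1 : ℝ) +ᵥ i)) := by
      rw [S_smul_S_smul, hΛ.thetaSeries_vadd_one_vadd hs]
    _ = (-Complex.I * (ModularGroup.S • ((1 : ℝ) +ᵥ i) : ℍ)) ^ (n / 2 : ℂ) *
        ((-Complex.I * ((-1 : ℝ) +ᵥ i : ℍ)) ^ (n / 2 : ℂ) *
          thetaSeries (Λ : Set (EuclideanSpace ℝ (Fin n))) ((-1 : ℝ) +ᵥ i)) := by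
      rw [hΛ.thetaSeries_vadd_S_smul_of_isHalfCharacteristic hs, one_vadd_S_smul_one_vadd, hi,
        hΛ.thetaSeries_S_smul]
    _ = Complex.exp (π * Complex.I * (n / 4)) *
        thetaSeries (Λ : Set (EuclideanSpace ℝ (Fin n))) ((1 : ℝ) +ᵥ i) := by
      rw [← mul_assoc, neg_I_mul_S_smul_one_vadd_I, neg_I_mul_neg_one_vadd_I,
        one_add_I_div_two_cpow_mul_one_add_I_cpow, ← hΛ.thetaSeries_two_vadd, vadd_vadd, div_div]
      norm_num
    _ = Complex.exp (π * Complex.I * (n / 4)) *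
        thetaSeries (s +ᵥ (Λ : Set (EuclideanSpace ℝ (Fin n)))) i := by
      rw [hinv]

theorem exists_norm_sq_eq_of_isHalfCharacteristic (hs : IsHalfCharacteristic Λ s) :
    ∃ m : ℤ, ‖s‖ ^ 2 = n / 4 + 2 * (m : ℝ) := by
  obtain ⟨m, hm⟩ := Complex.exp_eq_exp_iff_exists_int.mp
    (hΛ.cexp_pi_mul_I_mul_norm_sq_of_isHalfCharacteristic hs)
  refine ⟨m, ?_⟩
  have hm' : (π * Complex.I) * (‖s‖ ^ 2 : ℂ) = (π * Complex.I) * (n / 4 + 2 * m) := by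
    rw [hm]
    ring
  have hπI : (π : ℂ) * Complex.I ≠ 0 :=
    mul_ne_zero (mod_cast Real.pi_ne_zero) Complex.I_ne_zero
  apply Complex.ofReal_injective
  push_cast
  exact mul_left_cancel₀ hπI hm'

end IsUnimodularLattice

/-- The theta series of the shadow of `L`, of `L`, and of `L` translated by one: for `L = ℤ` these
are the Jacobi theta constants `θ₂`, `θ₃`, `θ₄`. -/
def latticeThetaTriple {n : ℕ} (L : Set (EuclideanSpace ℝ (Fin n))) : Fin 3 → ℍ → ℂ :=
  ![thetaSeries (shadow L), thetaSeries L, fun τ ↦ thetaSeries L ((1 : ℝ) +ᵥ τ)]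

theorem IsUnimodularLattice.isThetaTriple {n j : ℕ} (hn : n = 4 * j)
    {L : Set (EuclideanSpace ℝ (Fin n))} (hL : IsUnimodularLattice L) (hodd : IsOddLattice L) :
    IsThetaTriple (2 * j) ((-1) ^ j) (latticeThetaTriple L) := by
  obtain ⟨Λ, rfl⟩ := hL.exists_submodule_coe_eq
  obtain ⟨s, hs⟩ := hL.exists_isHalfCharacteristic
  have hcpow (τ : ℍ) : (-Complex.I * τ) ^ (n / 2 : ℂ) = (-1) ^ j * τ ^ (2 * j) := by
    rw [hn, neg_I_mul_cpow_half_mul]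
  have hε : Complex.exp (π * Complex.I * ‖s‖ ^ 2) = (-1) ^ j := by
    rw [hL.cexp_pi_mul_I_mul_norm_sq_of_isHalfCharacteristic hs, ← Complex.exp_pi_mul_I,
      ← Complex.exp_nat_mul, hn]
    push_cast
    ring_nf
  rw [latticeThetaTriple, hL.shadow_eq_vadd hodd hs]
  refine .of_S_smul (even_two_mul j) (by rw [← mul_pow]; norm_num) (fun τ ↦ ?_) (fun _ ↦ rfl)
    (fun τ ↦ ?_) (fun τ ↦ ?_) fun τ ↦ ?_
  · exact hε ▸ hL.thetaSeries_vadd_one_vadd hs τ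
  · change thetaSeries _ ((1 : ℝ) +ᵥ (1 : ℝ) +ᵥ τ) = thetaSeries _ τ
    rw [vadd_vadd, one_add_one_eq_two, hL.thetaSeries_two_vadd]
  · exact hcpow τ ▸ hL.thetaSeries_vadd_S_smul_of_isHalfCharacteristic hs τ
  · exact hcpow τ ▸ hL.thetaSeries_S_smul τ

section Counting

variable {n : ℕ} {A : Set (EuclideanSpace ℝ (Fin n))}

theorem finite_setOf_normOf_eq
    (hA : Summable fun x : A ↦ Real.exp (-π * ‖(x : EuclideanSpace ℝ (Fin n))‖ ^ 2)) (r : ℝ) :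
    {x ∈ A | normOf x = r}.Finite := by
  have hfinite : {x : A | normOf (x : EuclideanSpace ℝ (Fin n)) = r}.Finite := by
    refine (hA.tendsto_cofinite_zero.eventually (gt_mem_nhds (Real.exp_pos (-π * r)))).subset
      fun x hx ↦ ?_
    rw [Set.mem_ofPred_eq, normOf_eq_norm_sq] at hx
    simp [hx]
  exact (hfinite.image Subtype.val).subset fun x hx ↦ ⟨⟨x, hx.1⟩, hx.2, rfl⟩

theorem numVecsOfNorm_eq_zero {r : ℝ} (hr : ∀ x ∈ A, normOf x ≠ r) : numVecsOfNorm A r = 0 := by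
  rw [numVecsOfNorm, Set.sep_eq_empty_iff_mem_false.mpr hr, Set.ncard_empty]

theorem numVecsOfNorm_zero (hA : 0 ∈ A) : numVecsOfNorm A 0 = 1 := by
  rw [numVecsOfNorm, Set.ncard_eq_one]
  refine ⟨0, ?_⟩
  ext x
  simpa [normOf] using fun h ↦ h ▸ hA

theorem hasCuspCoeffs_thetaSeries {l : ℕ} {a : Fin l → ℤ}
    (hA : ∀ x ∈ A, ∃ m : ℕ, normOf x = m)
    (hsum : ∀ r : ℝ, 0 < r →
      Summable fun x : A ↦ Real.exp (-r * ‖(x : EuclideanSpace ℝ (Fin n))‖ ^ 2))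
    (ha : ∀ i : Fin l, numVecsOfNorm A (i : ℕ) = a i) : HasCuspCoeffs 2 (thetaSeries A) a := by
  choose ν hν using fun x : A ↦ hA x x.2
  refine .of_hasSum_pow (ν := ν) (fun τ ↦ ?_) fun i ↦ ?_
  · have hterm (x : A) : Complex.exp (π * Complex.I * τ * ‖(x : EuclideanSpace ℝ (Fin n))‖ ^ 2) =
        𝕢 2 τ ^ ν x := by
      rw [← Complex.ofReal_pow, ← normOf_eq_norm_sq, hν, Function.Periodic.qParam,
        ← Complex.exp_nat_mul]
      push_cast
      ring_nf
    have hsummable : Summable fun x : A ↦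
        Complex.exp (π * Complex.I * τ * ‖(x : EuclideanSpace ℝ (Fin n))‖ ^ 2) := by
      refine .of_norm_bounded (hsum (π * τ.im) (mul_pos Real.pi_pos τ.im_pos)) fun x ↦ le_of_eq ?_
      rw [← neg_neg (π * Complex.I * τ : ℂ), norm_cexp_neg_mul_norm_sq]
      simp
    exact hsummable.hasSum.congr_fun fun x ↦ (hterm x).symm
  · rw [← ha i, numVecsOfNorm, ← Set.ncard_image_of_injective _ Subtype.val_injective]
    congr 2
    ext x
    constructor
    · rintro ⟨x, hx, rfl⟩
      exact ⟨x.2, by rw [hν, hx]⟩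
    · rintro ⟨hx, hxi⟩
      exact ⟨⟨x, hx⟩, by exact_mod_cast (hν ⟨x, hx⟩).symm.trans hxi, rfl⟩

theorem HasMinNorm.numVecsOfNorm_eq_zero {r t : ℝ} (hA : HasMinNorm A r) (ht₀ : t ≠ 0)
    (ht : t < r) : numVecsOfNorm A t = 0 :=
  _root_.numVecsOfNorm_eq_zero fun x hx hxt ↦
    ht.not_ge (hA.2 ⟨x, hx, fun h ↦ ht₀ (by simpa [h, normOf] using hxt.symm), hxt⟩)

theorem HasShadowMinNorm.numVecsOfNorm_eq_zero {r t : ℝ} (hA : HasShadowMinNorm A r)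
    (ht : t < r) : numVecsOfNorm (shadow A) t = 0 :=
  _root_.numVecsOfNorm_eq_zero fun x hx hxt ↦ ht.not_ge (hA.2 ⟨x, hx, hxt⟩)

end Counting

namespace IsUnimodularLattice

variable {n : ℕ} {L : Set (EuclideanSpace ℝ (Fin n))} (hL : IsUnimodularLattice L)

include hL

theorem exists_normOf_eq_natCast {x : EuclideanSpace ℝ (Fin n)} (hx : x ∈ L) :
    ∃ m : ℕ, normOf x = m := by
  obtain ⟨Λ, rfl⟩ := hL.exists_submodule_coe_eq
  rw [normOf_eq_norm_sq]
  exact hL.exists_norm_sq_eq_natCast hx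

theorem summable_exp_neg_mul_norm_sq {r : ℝ} (hr : 0 < r) :
    Summable fun x : L ↦ Real.exp (-r * ‖(x : EuclideanSpace ℝ (Fin n))‖ ^ 2) := by
  obtain ⟨Λ, rfl⟩ := hL.exists_submodule_coe_eq
  have := hL.discreteTopology
  exact _root_.summable_exp_neg_mul_norm_sq Λ hr

theorem summable_shadow_exp_neg_mul_norm_sq (hodd : IsOddLattice L) {r : ℝ} (hr : 0 < r) :
    Summable fun x : shadow L ↦ Real.exp (-r * ‖(x : EuclideanSpace ℝ (Fin n))‖ ^ 2) := by
  obtain ⟨Λ, rfl⟩ := hL.exists_submodule_coe_eq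
  obtain ⟨s, hs⟩ := hL.exists_isHalfCharacteristic
  have := hL.discreteTopology
  rw [hL.shadow_eq_vadd hodd hs]
  have hmem (w : (s +ᵥ (Λ : Set (EuclideanSpace ℝ (Fin n))) : Set _)) : ↑w - s ∈ Λ := by
    rw [sub_eq_neg_add]
    exact Set.mem_vadd_set_iff_neg_vadd_mem.mp w.2
  have hinj : Function.Injective fun w ↦ (⟨↑w - s, hmem w⟩ : Λ) := fun v w h ↦
    Subtype.ext (sub_left_injective (congrArg Subtype.val h))
  refine ((summable_exp_neg_mul_norm_add_sq Λ s hr).comp_injective hinj).congr fun w ↦ ?_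
  rw [Function.comp_apply, sub_add_cancel]

end IsUnimodularLattice

section DimensionFortyFour

variable {L : Set (EuclideanSpace ℝ (Fin 44))} (hL : IsUnimodularLattice L)

include hL

theorem IsUnimodularLattice.exists_odd_normOf_eq_of_mem_shadow {w : EuclideanSpace ℝ (Fin 44)}
    (hw : w ∈ shadow L) : ∃ m : ℕ, Odd m ∧ normOf w = m := by
  obtain ⟨Λ, rfl⟩ := hL.exists_submodule_coe_eq
  obtain ⟨m, hm⟩ := hL.exists_norm_sq_eq_of_isHalfCharacteristic
    (hL.isHalfCharacteristic_of_mem_shadow hw)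
  have hnorm : normOf w = (11 + 2 * m : ℤ) := by
    rw [normOf_eq_norm_sq, hm]
    push_cast
    norm_num
  have hpos : (0 : ℤ) ≤ 11 + 2 * m := by
    have hpos' : (0 : ℝ) ≤ (11 + 2 * m : ℤ) := hnorm ▸ real_inner_self_nonneg
    exact_mod_cast hpos'
  obtain ⟨k, hk⟩ := Int.eq_ofNat_of_zero_le hpos
  refine ⟨k, ?_, ?_⟩
  · rw [Nat.odd_iff]
    lia
  · rw [hnorm, hk, Int.cast_natCast]

theorem IsUnimodularLattice.numVecsOfNorm_shadow_eq_zero {k : ℕ} (hk : Even k) :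
    numVecsOfNorm (shadow L) k = 0 :=
  numVecsOfNorm_eq_zero fun w hw hwk ↦ by
    obtain ⟨m, hm, hwm⟩ := hL.exists_odd_normOf_eq_of_mem_shadow hw
    obtain rfl : m = k := by exact_mod_cast hwm.symm.trans hwk
    exact Nat.not_even_iff_odd.mpr hm hk

theorem IsUnimodularLattice.hasCuspCoeffs_thetaSeries_shadow (hodd : IsOddLattice L) :
    HasCuspCoeffs 2 (thetaSeries (shadow L)) ![0, numVecsOfNorm (shadow L) 1, 0,
      numVecsOfNorm (shadow L) 3, 0, numVecsOfNorm (shadow L) 5, 0] := by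
  refine hasCuspCoeffs_thetaSeries (fun w hw ↦ ?_)
    (fun _ ↦ hL.summable_shadow_exp_neg_mul_norm_sq hodd) fun i ↦ ?_
  · obtain ⟨m, -, hm⟩ := hL.exists_odd_normOf_eq_of_mem_shadow hw
    exact ⟨m, hm⟩
  · rcases Nat.even_or_odd i with hi | hi
    · rw [hL.numVecsOfNorm_shadow_eq_zero hi]
      fin_cases i <;> first | rfl | exact absurd hi (by decide)
    · fin_cases i <;> first | exact absurd hi (by decide) | norm_num

theorem IsUnimodularLattice.hasCuspCoeffs_thetaSeries (hmin : HasMinNorm L 4) :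
    HasCuspCoeffs 2 (thetaSeries L)
      ![1, 0, 0, 0, numVecsOfNorm L 4, numVecsOfNorm L 5, numVecsOfNorm L 6] := by
  have h0 : (0 : EuclideanSpace ℝ (Fin 44)) ∈ L := by
    rw [hL]
    exact fun y _ ↦ ⟨0, by simp⟩
  refine _root_.hasCuspCoeffs_thetaSeries (fun _ ↦ hL.exists_normOf_eq_natCast)
    (fun _ ↦ hL.summable_exp_neg_mul_norm_sq) fun i ↦ ?_
  rcases lt_or_ge (i : ℕ) 4 with hi | hi
  · by_cases hi₀ : (i : ℕ) = 0
    · fin_cases i <;> simp_all [numVecsOfNorm_zero]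
    · rw [hmin.numVecsOfNorm_eq_zero (by exact_mod_cast hi₀) (by exact_mod_cast hi)]
      fin_cases i <;> simp_all
  · fin_cases i <;> simp_all

theorem IsUnimodularLattice.isThetaTriple_weight_twenty_two (hodd : IsOddLattice L) :
    IsThetaTriple 22 (-1) (latticeThetaTriple L) := by
  have h := hL.isThetaTriple (j := 11) rfl hodd
  rwa [Odd.neg_one_pow (by decide)] at h

theorem IsUnimodularLattice.numVecsOfNorm_four_eq (hodd : IsOddLattice L) (hmin : HasMinNorm L 4) :
    numVecsOfNorm L 4 =
      6600 + 1216 * numVecsOfNorm (shadow L) 1 + 16 * numVecsOfNorm (shadow L) 3 := by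
  exact_mod_cast (hL.isThetaTriple_weight_twenty_two hodd).coeff_four_eq
    (hL.hasCuspCoeffs_thetaSeries_shadow hodd) (hL.hasCuspCoeffs_thetaSeries hmin)

theorem IsUnimodularLattice.numVecsOfNorm_shadow_five_eq (hodd : IsOddLattice L)
    (hmin : HasMinNorm L 4) (h₁ : numVecsOfNorm (shadow L) 1 = 0)
    (h₃ : numVecsOfNorm (shadow L) 3 = 0) : numVecsOfNorm (shadow L) 5 = 1622016 := by
  have ha := hL.hasCuspCoeffs_thetaSeries_shadow hodd
  rw [h₁, h₃] at ha
  exact_mod_cast (hL.isThetaTriple_weight_twenty_two hodd).coeff_five_eq ha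
    (hL.hasCuspCoeffs_thetaSeries hmin)

theorem IsUnimodularLattice.hasSigma_twenty_iff (hodd : IsOddLattice L) (hmin : HasMinNorm L 4) :
    HasSigma L 20 ↔ numVecsOfNorm (shadow L) 1 = 0 ∧ numVecsOfNorm (shadow L) 3 = 0 := by
  constructor
  · rintro ⟨r, hr, hr20⟩
    obtain rfl : r = 5 := by linarith
    exact ⟨hr.numVecsOfNorm_eq_zero (by norm_num), hr.numVecsOfNorm_eq_zero (by norm_num)⟩
  · rintro ⟨h₁, h₃⟩
    have hfive := hL.numVecsOfNorm_shadow_five_eq hodd hmin h₁ h₃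
    obtain ⟨w, hw, hw5⟩ := Set.nonempty_of_ncard_ne_zero (hfive.trans_ne (by norm_num))
    refine ⟨5, ⟨⟨w, hw, hw5⟩, ?_⟩, by norm_num⟩
    rintro _ ⟨v, hv, rfl⟩
    obtain ⟨m, hodd_m, hm⟩ := hL.exists_odd_normOf_eq_of_mem_shadow hv
    have hfin := finite_setOf_normOf_eq (hL.summable_shadow_exp_neg_mul_norm_sq hodd Real.pi_pos)
    have hm₁ : m ≠ 1 := by
      rintro rfl
      exact ((Set.ncard_eq_zero (hfin 1)).mp h₁).subset ⟨hv, by simpa using hm⟩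
    have hm₃ : m ≠ 3 := by
      rintro rfl
      exact ((Set.ncard_eq_zero (hfin 3)).mp h₃).subset ⟨hv, by simpa using hm⟩
    have hm5 : 5 ≤ m := by
      obtain ⟨k, rfl⟩ := hodd_m
      lia
    rw [hm]
    exact_mod_cast hm5

end DimensionFortyFour

theorem kissing_number_dim44 {L : Set (EuclideanSpace ℝ (Fin 44))}
    (huni : IsUnimodularLattice L) (hodd : IsOddLattice L) (hmin : HasMinNorm L 4) :
    numVecsOfNorm L 4 = 6600 ↔ HasSigma L 20 := by
  rw [huni.numVecsOfNorm_four_eq hodd hmin, huni.hasSigma_twenty_iff hodd hmin]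
  lia
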